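/- Let M be a d-dimensional manifold without boundary, π : E → M a fiber bundle with path-connected fiber, and W a sufficiently separated collection for π. Let F ⊆ Γ(E) be a subspace, and for pairwise disjoint elements (Δ_1,γ_1), …, (Δ_k,γ_k) of W set F(rel Δ_1, …, Δ_k) := F ∩ Γ(E, Δ_1, …, Δ_k). If for every k ≥ 1 and every k-tuple of pairwise disjoint elements of W the inclusion F(rel Δ_1, …, Δ_k) ↪ Γ(E, Δ_1, …, Δ_k) is a weak homotopy equivalence, then there exist a topological space X and continuous maps s : X → F and w : X → Γ(E) such that w equals the composite of s with the inclusion F ↪ Γ(E) and w is a weak homotopy equivalence; in particular, the inclusion F ↪ Γ(E) admits a section up to weak homotopy. -/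

import Mathlib

/-!
The separation property provides an infinite sequence `g 0, g 1, …` in `W` with pairwise disjoint
underlying sets.  Let `G i` be the space of sections with germ `g i`.  The space `X` is a resolution
of `Fs` (`Resolution`): its points are elements of `Fs` together with a nonempty set of indices `i`
for which they lie in `G i`, and it is topologized such that a map into `X` is a map into `Fs`
together with an open cover of the source on whose `i`-th member the values are in `G i`.  The map
`w` is the projection to the space of sections; it visibly factors through `Fs`.

That `w` is a weak homotopy equivalence is a lifting property for pairs consisting of a cube and its
boundary (`HLift`, `isWeakHomotopyEquiv_of_hLift`).  Given a cube of sections, with a lift to `X` on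
the boundary, compactness shows that the lift involves only finitely many indices.  For a further
index `m`, the family can be deformed into `G m` without changing it on the sets belonging to these
indices (`exists_deform_to_germ`): the bundle is trivial over a disk around the `m`-th set
(`trivOn_disk`), this set is contractible and cofibrantly embedded, and the fiber is path connected.
Joining this deformation to the boundary along a collar gives a cube of sections which is covered by
finitely many of the `G i`.

Now subdivide the cube such that each cell lies in some `G i`, and move it into `Fs` cell by cell
(`grid_deform`): over a cell, let `S` be the nonempty set of all relevant constraints; the
inclusion of `Fs ∩ ⋂ i ∈ S, G i` into `⋂ i ∈ S, G i` is a weak homotopy equivalence by hypothesis,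
hence maps of pairs from a cube can be compressed (`compress_of_whe`), also relative to a homotopy
already given on the boundary (`Compress.extend`).  All constraints are preserved, so the result,
with its open cover, is a lift to `X`.  These steps are combined in `hLift_resolutionMap`.
-/

open scoped unitInterval Topology

universe u v w

section WHE

variable {X : Type u} {Y : Type v} [TopologicalSpace X] [TopologicalSpace Y]

/-- The map induced on path components by a continuous map. -/
noncomputable def pi0Map (f : C(X, Y)) : ZerothHomotopy X → ZerothHomotopy Y :=
  Quotient.map f (fun _ _ h => ⟨h.somePath.map f.continuous⟩)

/-- The map induced on generalized loops by a continuous map. -/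
def genLoopMap {N : Type} (f : C(X, Y)) {x : X} (p : GenLoop N X x) :
    GenLoop N Y (f x) :=
  ⟨f.comp p.1, fun y hy => by
    show f (p.1 y) = f x
    rw [p.2 y hy]⟩

theorem genLoopMap_homotopic {N : Type} (f : C(X, Y)) {x : X} {p q : GenLoop N X x}
    (h : GenLoop.Homotopic p q) : GenLoop.Homotopic (genLoopMap f p) (genLoopMap f q) :=
  h.map (fun H => H.compContinuousMap f)

/-- The map induced on `n`-th homotopy groups by a continuous map. -/
noncomputable def piMap (n : ℕ) (f : C(X, Y)) (x : X) :
    HomotopyGroup (Fin n) X x → HomotopyGroup (Fin n) Y (f x) :=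
  Quotient.map (genLoopMap f) (fun _ _ h => genLoopMap_homotopic f h)

/-- A map of topological spaces is a weak homotopy equivalence if it is continuous, induces a
bijection on path components and, for every basepoint and every `n ≥ 1`, a bijection on `n`-th
homotopy groups. -/
def IsWeakHomotopyEquiv (f : X → Y) : Prop :=
  ∃ hf : Continuous f,
    Function.Bijective (pi0Map ⟨f, hf⟩) ∧
      ∀ n : ℕ, 1 ≤ n → ∀ x : X, Function.Bijective (piMap n ⟨f, hf⟩ x)

end WHE

section Cofib

/-- The inclusion of a closed subset `A ⊆ X` is a closed cofibration if it satisfies the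
homotopy extension property with respect to all spaces. -/
def ClosedCofibration {X : Type u} [TopologicalSpace X] (A : Set X) : Prop :=
  IsClosed A ∧ ∀ (Z : Type u) [TopologicalSpace Z] (f : C(X, Z))
    (h : C(A × unitInterval, Z)), (∀ a : A, h (a, 0) = f a) →
      ∃ H : C(X × unitInterval, Z), (∀ x : X, H (x, 0) = f x) ∧
        ∀ (a : A) (t : unitInterval), H (↑a, t) = h (a, t)

end Cofib

section Bundle

variable {E M : Type u} [TopologicalSpace E] [TopologicalSpace M]

/-- `π : E → M` is a fiber bundle with fiber `F`: a continuous map which is locally on `M`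
trivial with fiber `F`. -/
structure IsFiberBundle (F : Type u) [TopologicalSpace F] (π : E → M) : Prop where
  continuous : Continuous π
  locTriv : ∀ x : M, ∃ U : Set M, IsOpen U ∧ x ∈ U ∧
    ∃ e : (π ⁻¹' U) ≃ₜ (U × F), ∀ y : π ⁻¹' U, ((e y).1 : M) = π ↑y

/-- The space of continuous sections of `π : E → M`, topologized as a subspace of `C(M, E)`
with the compact-open topology. -/
abbrev SectionSpace (π : E → M) : Type u :=
  {s : C(M, E) // ∀ x : M, π (s x) = x}

/-- The closed unit ball in `ℝ^d`. -/
def closedDisk (d : ℕ) : Set (EuclideanSpace ℝ (Fin d)) :=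
  Metric.closedBall 0 1

/-- A subset `Δ ⊆ M` together with (a representative of) a germ of a continuous section of
`π` on a neighborhood of `Δ`. -/
structure GermData (π : E → M) : Type u where
  Δ : Set M
  U : Set M
  isOpen : IsOpen U
  subset : Δ ⊆ U
  sec : C(U, E)
  isSec : ∀ x : U, π (sec x) = ↑x

/-- A section has germ `g` if it agrees with the germ's section on the underlying set. -/
def GermData.Fixes {π : E → M} (g : GermData π) (s : SectionSpace π) : Prop :=
  ∀ x (hx : x ∈ g.Δ), s.1 x = g.sec ⟨x, g.subset hx⟩

/-- The space `Γ(E, Δ_0, …, Δ_k)` of sections agreeing with the given germs `γ_i` on the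
sets `Δ_i`. -/
def relSections {π : E → M} {k : ℕ} (g : Fin k → GermData π) : Set (SectionSpace π) :=
  {s | ∀ i, (g i).Fixes s}

/-- A tuple of pairs `(Δ_i, γ_i)` is disjoint if the underlying sets are pairwise disjoint. -/
def DisjTuple {π : E → M} {k : ℕ} (g : Fin k → GermData π) : Prop :=
  ∀ i j, i ≠ j → Disjoint (g i).Δ (g j).Δ

/-- A sufficiently separated collection for the bundle `π : E → M` over a `d`-dimensional
manifold `M`. -/
structure IsSuffSep (d : ℕ) {E M : Type u} [TopologicalSpace E] [TopologicalSpace M]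
    (π : E → M) (W : Set (GermData π)) : Prop where
  compact : ∀ g ∈ W, IsCompact g.Δ
  contractible : ∀ g ∈ W, ContractibleSpace g.Δ
  cofib : ∀ g ∈ W, ∃ D : Set M, Nonempty (D ≃ₜ closedDisk d) ∧ g.Δ ⊆ interior D ∧
    ClosedCofibration (X := D) (Subtype.val ⁻¹' g.Δ)
  sep : ∀ (k : ℕ) (g : Fin k → GermData π), (∀ i, g i ∈ W) →
    ∃ g' ∈ W, ∃ D : Set M, Nonempty (D ≃ₜ closedDisk d) ∧ g'.Δ ⊆ interior D ∧
      ∀ i, Disjoint D (g i).Δ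

end Bundle

section Simplex

/-- The `i`-th face inclusion `Δ^p → Δ^{p+1}` of standard topological simplices. -/
def simplexFace {p : ℕ} (i : Fin (p + 2)) (t : stdSimplex ℝ (Fin (p + 1))) :
    stdSimplex ℝ (Fin (p + 2)) :=
  ⟨i.insertNth 0 t.1, by
    constructor
    · intro x
      rcases eq_or_ne x i with rfl | hx
      · simp
      · obtain ⟨j, rfl⟩ := Fin.exists_succAbove_eq hx
        rw [Fin.insertNth_apply_succAbove]
        exact t.2.1 j
    · rw [Fin.sum_univ_succAbove _ i]
      simp only [Fin.insertNth_apply_same, Fin.insertNth_apply_succAbove, zero_add]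
      exact t.2.2⟩

end Simplex

/-! ### Induction over integral boxes -/

/-- Induction over integral boxes: a property of boxes `[a, b]` that holds for boxes with all
sides of length at most one, and that passes from the two halves and the separating wall of an
integral subdivision to the whole box, holds for every box. -/
theorem box_induction {n : ℕ} (P : (Fin n → ℤ) → (Fin n → ℤ) → Prop)
    (base : ∀ a b, (∀ i, a i ≤ b i) → (∀ i, b i ≤ a i + 1) → P a b)
    (step : ∀ a b i m, (∀ i, a i ≤ b i) → a i < m → m < b i →
      P (Function.update a i m) (Function.update b i m) →
      P a (Function.update b i m) → P (Function.update a i m) b → P a b) :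
    ∀ a b, (∀ i, a i ≤ b i) → P a b := by
  have key : ∀ (k : ℕ) (a b : Fin n → ℤ), (∀ i, a i ≤ b i) →
      ∑ i, (b i - a i) ≤ (k : ℤ) → P a b := by
    intro k
    induction k with
    | zero =>
      intro a b hab hs
      refine base a b hab fun i => ?_
      have h0 : ∀ j ∈ Finset.univ, 0 ≤ b j - a j := fun j _ => by linarith [hab j]
      have := Finset.single_le_sum h0 (Finset.mem_univ i)
      push_cast at hs
      linarith
    | succ k ih =>
      intro a b hab hs
      by_cases hb : ∀ i, b i ≤ a i + 1
      · exact base a b hab hb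
      push Not at hb
      obtain ⟨i, hi⟩ := hb
      have hu : ∀ (c : Fin n → ℤ) (m : ℤ) (j : Fin n),
          Function.update c i m j = if j = i then m else c j := fun c m j => by
        simp [Function.update_apply]
      have hle : ∀ a' b' : Fin n → ℤ, (∀ j, b' j - a' j ≤ b j - a j) →
          b' i - a' i < b i - a i → ∑ j, (b' j - a' j) ≤ (k : ℤ) := by
        intro a' b' h1 h2
        have : ∑ j, (b' j - a' j) < ∑ j, (b j - a j) :=
          Finset.sum_lt_sum (fun j _ => h1 j) ⟨i, Finset.mem_univ i, h2⟩
        push_cast at hs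
        linarith
      refine step a b i (a i + 1) hab (by linarith) hi (ih _ _ ?_ (hle _ _ ?_ ?_))
        (ih _ _ ?_ (hle _ _ ?_ ?_)) (ih _ _ ?_ (hle _ _ ?_ ?_))
      all_goals first
        | (intro j; have := hab j; rw [hu]; try rw [hu]
           split_ifs with h
           · subst h; linarith
           · linarith)
        | (simp only [Function.update_self]; linarith)
  intro a b hab
  refine key (∑ i, (b i - a i)).toNat a b hab ?_
  rw [Int.toNat_of_nonneg]
  exact Finset.sum_nonneg fun i _ => by linarith [hab i]

/-! ### Compressible pairs -/

/-- The pair `(Y, A)` of subsets of `Z` is compressible in dimension `n`: every map of pairs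
`([-1,1]^n, ∂[-1,1]^n) → (Y, A)` is homotopic, through maps of pairs, to a map into `A`.  The cube
is the closed unit ball of the sup norm, and only the values on the cube matter. -/
def Compress {Z : Type*} [TopologicalSpace Z] (A Y : Set Z) (n : ℕ) : Prop :=
  ∀ b : C(Fin n → ℝ, Z), (∀ x, ‖x‖ ≤ 1 → b x ∈ Y) → (∀ x, ‖x‖ = 1 → b x ∈ A) →
    ∃ H : C((Fin n → ℝ) × ℝ, Z), (∀ x, ‖x‖ ≤ 1 → H (x, 0) = b x) ∧
      (∀ x t, ‖x‖ ≤ 1 → t ∈ Set.Icc (0 : ℝ) 1 → H (x, t) ∈ Y) ∧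
      (∀ x t, ‖x‖ = 1 → t ∈ Set.Icc (0 : ℝ) 1 → H (x, t) ∈ A) ∧
      (∀ x, ‖x‖ ≤ 1 → H (x, 1) ∈ A)

/-- Radial retraction of `ℝ^n`, with the sup norm, onto its closed unit ball `[-1,1]^n`. -/
noncomputable def ballRetr {n : ℕ} (x : Fin n → ℝ) : Fin n → ℝ := (max 1 ‖x‖)⁻¹ • x

theorem continuous_ballRetr {n : ℕ} : Continuous (ballRetr (n := n)) := by
  unfold ballRetr
  refine Continuous.fun_smul (Continuous.fun_inv₀ (by fun_prop) fun x => ?_) continuous_id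
  have := le_max_left 1 ‖x‖
  positivity

theorem norm_ballRetr_le {n : ℕ} (x : Fin n → ℝ) : ‖ballRetr x‖ ≤ 1 := by
  unfold ballRetr
  have h1 := le_max_left 1 ‖x‖
  have h2 := le_max_right 1 ‖x‖
  rw [norm_smul, norm_inv, Real.norm_of_nonneg (by linarith), inv_mul_le_iff₀ (by linarith)]
  linarith

theorem ballRetr_of_le {n : ℕ} {x : Fin n → ℝ} (hx : ‖x‖ ≤ 1) : ballRetr x = x := by
  simp [ballRetr, max_eq_left hx]

/-- Compression relative to a prescribed homotopy on the boundary: a map on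
`[-1,1]^n × {0} ∪ ∂[-1,1]^n × [0,1]` that takes `∂[-1,1]^n × {1}` into `A` extends to
`[-1,1]^n × [0,1]`, with the top face mapping into `A`. -/
theorem Compress.extend {Z : Type*} [TopologicalSpace Z] {A Y : Set Z} {n : ℕ}
    (hc : Compress A Y n) (φ : (Fin n → ℝ) × ℝ → Z)
    (hφ : ContinuousOn φ {p | (‖p.1‖ ≤ 1 ∧ p.2 = 0) ∨ (‖p.1‖ = 1 ∧ p.2 ∈ Set.Icc (0 : ℝ) 1)})
    (h0 : ∀ x, ‖x‖ ≤ 1 → φ (x, 0) ∈ Y)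
    (h1 : ∀ x t, ‖x‖ = 1 → t ∈ Set.Icc (0 : ℝ) 1 → φ (x, t) ∈ Y)
    (hA : ∀ x, ‖x‖ = 1 → φ (x, 1) ∈ A) :
    ∃ G : (Fin n → ℝ) × ℝ → Z, ContinuousOn G {p | ‖p.1‖ ≤ 1 ∧ p.2 ∈ Set.Icc (0 : ℝ) 1} ∧
      (∀ x, ‖x‖ ≤ 1 → G (x, 0) = φ (x, 0)) ∧
      (∀ x t, ‖x‖ = 1 → t ∈ Set.Icc (0 : ℝ) 1 → G (x, t) = φ (x, t)) ∧
      (∀ x t, ‖x‖ ≤ 1 → t ∈ Set.Icc (0 : ℝ) 1 → G (x, t) ∈ Y) ∧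
      (∀ x, ‖x‖ ≤ 1 → G (x, 1) ∈ A) := by
  -- `u` unfolds the cube onto its bottom and sides.
  let u : (Fin n → ℝ) → (Fin n → ℝ) × ℝ := fun x =>
    ((max ‖x‖ (1 / 2))⁻¹ • x, max (2 * ‖x‖ - 1) 0)
  have hu : Continuous u := by
    refine Continuous.prodMk (Continuous.fun_smul (Continuous.fun_inv₀ (by fun_prop) fun x => ?_)
      continuous_id) (by fun_prop)
    have := le_max_right ‖x‖ (1 / 2)
    positivity
  have huT : ∀ x, ‖x‖ ≤ 1 → (‖(u x).1‖ ≤ 1 ∧ (u x).2 = 0) ∨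
      (‖(u x).1‖ = 1 ∧ (u x).2 ∈ Set.Icc (0 : ℝ) 1) := by
    intro x hx
    rcases le_total ‖x‖ (1 / 2) with h | h
    · left
      simp only [u, max_eq_right h]
      refine ⟨?_, max_eq_right (by linarith)⟩
      rw [norm_smul]; norm_num; linarith
    · right
      simp only [u, max_eq_left h]
      refine ⟨?_, le_max_right _ _, max_le (by linarith) (by norm_num)⟩
      rw [norm_smul, norm_inv, norm_norm, inv_mul_cancel₀ (by linarith)]
  let b : C(Fin n → ℝ, Z) := ⟨fun x => φ (u (ballRetr x)), by
    refine hφ.comp_continuous (hu.comp continuous_ballRetr) fun x => ?_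
    exact huT _ (norm_ballRetr_le x)⟩
  have hb : ∀ x, ‖x‖ ≤ 1 → b x = φ (u x) := fun x hx => by
    show φ (u (ballRetr x)) = _
    rw [ballRetr_of_le hx]
  have hu1 : ∀ x, ‖x‖ = 1 → u x = (x, 1) := fun x hx => by
    simp only [u, hx]; norm_num
  obtain ⟨H, H0, HY, HA, H1⟩ := hc b
    (fun x hx => by
      rw [hb x hx]
      have hh : u x = ((u x).1, (u x).2) := rfl
      rw [hh]
      rcases huT x hx with ⟨h, h'⟩ | ⟨h, h'⟩
      · rw [h']; exact h0 _ h
      · exact h1 _ _ h h')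
    (fun x hx => by rw [hb x hx.le, hu1 x hx]; exact hA x hx)
  -- `v` carries bottom and sides to the bottom, inverting `u`, and the top to the sides and top.
  let c : (Fin n → ℝ) × ℝ → ℝ := fun p => (1 + p.2) / 2 / max ‖p.1‖ ((1 + p.2) / (1 + 3 * p.2))
  let v : (Fin n → ℝ) × ℝ → (Fin n → ℝ) × ℝ := fun p => (c p • p.1, min p.2 (2 - 2 * ‖p.1‖))
  have hpos : ∀ t : ℝ, t ∈ Set.Icc (0 : ℝ) 1 → 0 < (1 + t) / (1 + 3 * t) := fun t ht => by
    have := ht.1; positivity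
  have hcnorm : ∀ x t, t ∈ Set.Icc (0 : ℝ) 1 → ‖(v (x, t)).1‖ = c (x, t) * ‖x‖ := by
    intro x t ht
    have := hpos t ht
    have h2 := lt_max_of_lt_right (b := ‖x‖) this
    have h3 := ht.1
    simp only [v, norm_smul]
    rw [Real.norm_of_nonneg]
    simp only [c]
    positivity
  have hvle : ∀ x t, ‖x‖ ≤ 1 → t ∈ Set.Icc (0 : ℝ) 1 → ‖(v (x, t)).1‖ ≤ 1 := by
    intro x t hx ht
    rw [hcnorm x t ht]
    have h2 := lt_max_of_lt_right (b := ‖x‖) (hpos t ht)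
    have h3 := le_max_left ‖x‖ ((1 + t) / (1 + 3 * t))
    simp only [c]
    rw [div_mul_eq_mul_div, div_le_one h2]
    have := ht.2
    have := norm_nonneg x
    nlinarith
  have hvI : ∀ x t, ‖x‖ ≤ 1 → t ∈ Set.Icc (0 : ℝ) 1 → (v (x, t)).2 ∈ Set.Icc (0 : ℝ) 1 := by
    intro x t hx ht
    exact ⟨le_min ht.1 (by linarith), (min_le_left _ _).trans ht.2⟩
  have hbot : ∀ x t, ‖x‖ ≤ 1 → t ∈ Set.Icc (0 : ℝ) 1 → (v (x, t)).2 = 0 →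
      H (v (x, t)) = φ (u (v (x, t)).1) := by
    intro x t hx ht h
    have hh : v (x, t) = ((v (x, t)).1, 0) := Prod.ext rfl h
    rw [hh, H0 _ (hvle x t hx ht), hb _ (hvle x t hx ht)]
  refine ⟨fun p => H (v p), ?_, ?_, ?_, ?_, ?_⟩
  · refine H.continuous.comp_continuousOn ?_
    refine ContinuousOn.prodMk (ContinuousOn.fun_smul ?_ continuousOn_fst) (by fun_prop)
    refine ContinuousOn.div₀ (by fun_prop) ?_ ?_
    · refine ContinuousOn.sup (by fun_prop) (ContinuousOn.div₀ (by fun_prop) (by fun_prop) ?_)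
      rintro ⟨x, t⟩ ⟨-, ht⟩
      have := ht.1
      dsimp only at this ⊢
      positivity
    · rintro ⟨x, t⟩ ⟨-, ht⟩
      exact (lt_max_of_lt_right (hpos t ht)).ne'
  · intro x hx
    have h01 : (0 : ℝ) ∈ Set.Icc (0 : ℝ) 1 := by simp
    have hv : v (x, 0) = ((1 / 2 : ℝ) • x, 0) := by
      simp only [v, c]
      rw [min_eq_left (by linarith)]
      norm_num [max_eq_right hx]
    show H (v (x, 0)) = _
    rw [hbot x 0 hx h01 (by rw [hv]), hv]
    congr 1
    simp only [u, norm_smul]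
    rw [max_eq_right (by norm_num; linarith), max_eq_right (by norm_num; linarith), smul_smul]
    norm_num
  · intro x t hx ht
    have hv : v (x, t) = (((1 + t) / 2) • x, 0) := by
      have h3 := ht.1
      simp only [v, c, hx]
      rw [min_eq_right (by linarith), max_eq_left]
      · norm_num
      · rw [div_le_one (by positivity)]; linarith
    show H (v (x, t)) = _
    rw [hbot x t hx.le ht (by rw [hv]), hv]
    congr 1
    have h3 := ht.1
    simp only [u, norm_smul, hx]
    rw [Real.norm_of_nonneg (by positivity), max_eq_left (by linarith),
      max_eq_left (by linarith), smul_smul, mul_one, inv_mul_cancel₀ (by positivity), one_smul]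
    congr 1
    ring
  · intro x t hx ht
    exact HY _ _ (hvle x t hx ht) (hvI x t hx ht)
  · intro x hx
    have h11 : (1 : ℝ) ∈ Set.Icc (0 : ℝ) 1 := by simp
    show H (v (x, 1)) ∈ A
    rcases le_total ‖x‖ (1 / 2) with h | h
    · have : v (x, 1) = ((v (x, 1)).1, 1) := Prod.ext rfl (min_eq_left (by linarith))
      rw [this]
      exact H1 _ (hvle x 1 hx h11)
    · have : ‖(v (x, 1)).1‖ = 1 := by
        rw [hcnorm x 1 h11]
        simp only [c]
        rw [max_eq_left (by norm_num; linarith)]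
        field_simp
        norm_num
      exact HA _ _ this (hvI x 1 hx h11)

/-! ### Homotopy groups in cube coordinates -/

theorem pi_norm_eq_one_iff {n : ℕ} {x : Fin n → ℝ} (hx : ∀ i, |x i| ≤ 1) :
    ‖x‖ = 1 ↔ ∃ i, |x i| = 1 := by
  constructor
  · intro h
    by_contra hne
    push Not at hne
    have : ‖x‖ < 1 := (pi_norm_lt_iff one_pos).2 fun i => lt_of_le_of_ne (hx i) (hne i)
    linarith
  · rintro ⟨i, hi⟩
    refine le_antisymm ((pi_norm_le_iff_of_nonneg zero_le_one).2 hx) ?_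
    rw [← hi]
    exact norm_le_pi_norm x i

/-- The coordinate change from `[-1,1]^n` to `[0,1]^n`, extended by clamping. -/
noncomputable def toCube {n : ℕ} (x : Fin n → ℝ) : Fin n → I :=
  fun i => Set.projIcc 0 1 zero_le_one ((x i + 1) / 2)

/-- The coordinate change from `[0,1]^n` to `[-1,1]^n`. -/
def ofCube {n : ℕ} (y : Fin n → I) : Fin n → ℝ := fun i => 2 * (y i : ℝ) - 1

theorem continuous_toCube {n : ℕ} : Continuous (toCube (n := n)) :=
  continuous_pi fun i => continuous_projIcc.comp (by fun_prop)

theorem continuous_ofCube {n : ℕ} : Continuous (ofCube (n := n)) :=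
  continuous_pi fun i => by unfold ofCube; fun_prop

theorem ofCube_toCube {n : ℕ} {x : Fin n → ℝ} (hx : ‖x‖ ≤ 1) : ofCube (toCube x) = x := by
  funext i
  have h := abs_le.1 ((norm_le_pi_norm x i).trans hx)
  simp only [ofCube, toCube]
  rw [Set.projIcc_of_mem zero_le_one ⟨by linarith, by linarith⟩]
  simp only
  ring

theorem toCube_ofCube {n : ℕ} (y : Fin n → I) : toCube (ofCube y) = y := by
  funext i
  simp only [ofCube, toCube]
  rw [show (2 * (y i : ℝ) - 1 + 1) / 2 = y i by ring, Set.projIcc_val]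

theorem abs_ofCube_le {n : ℕ} (y : Fin n → I) (i : Fin n) : |ofCube y i| ≤ 1 := by
  have h := (y i).2
  exact abs_le.2 ⟨by simp only [ofCube]; linarith [h.1], by simp only [ofCube]; linarith [h.2]⟩

theorem norm_ofCube_le {n : ℕ} (y : Fin n → I) : ‖ofCube y‖ ≤ 1 :=
  (pi_norm_le_iff_of_nonneg zero_le_one).2 (abs_ofCube_le y)

theorem mem_boundary_iff {n : ℕ} (y : Fin n → I) :
    y ∈ Cube.boundary (Fin n) ↔ ‖ofCube y‖ = 1 := by
  rw [pi_norm_eq_one_iff (abs_ofCube_le y)]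
  refine exists_congr fun i => ?_
  rw [abs_eq zero_le_one]
  simp only [ofCube]
  constructor
  · rintro (h | h)
    · right; simp [h]
    · left; simp [h]; norm_num
  · rintro (h | h)
    · right; exact Subtype.ext (show (y i : ℝ) = 1 by linarith)
    · left; exact Subtype.ext (show (y i : ℝ) = 0 by linarith)

theorem toCube_mem_boundary {n : ℕ} {x : Fin n → ℝ} (hx : ‖x‖ = 1) :
    toCube x ∈ Cube.boundary (Fin n) := by
  rw [mem_boundary_iff, ofCube_toCube hx.le, hx]

section

variable {Z : Type*} [TopologicalSpace Z] {A Y : Set Z}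

/-- Homotopy through maps of pairs `([-1,1]^n, ∂[-1,1]^n) → (Y, A)`. -/
def PairHtpy (A Y : Set Z) {n : ℕ} (b b' : C(Fin n → ℝ, Z)) : Prop :=
  ∃ H : C((Fin n → ℝ) × ℝ, Z), (∀ x, ‖x‖ ≤ 1 → H (x, 0) = b x) ∧
    (∀ x, ‖x‖ ≤ 1 → H (x, 1) = b' x) ∧
    (∀ x t, ‖x‖ ≤ 1 → t ∈ Set.Icc (0 : ℝ) 1 → H (x, t) ∈ Y) ∧
    (∀ x t, ‖x‖ = 1 → t ∈ Set.Icc (0 : ℝ) 1 → H (x, t) ∈ A)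

theorem PairHtpy.trans {n : ℕ} {b b' b'' : C(Fin n → ℝ, Z)} (h : PairHtpy A Y b b')
    (h' : PairHtpy A Y b' b'') : PairHtpy A Y b b'' := by
  obtain ⟨H, H0, H1, HY, HA⟩ := h
  obtain ⟨K, K0, K1, KY, KA⟩ := h'
  refine ⟨⟨fun p => if 2 * p.2 ≤ 1 then H (ballRetr p.1, 2 * p.2)
    else K (ballRetr p.1, 2 * p.2 - 1), ?_⟩, ?_, ?_, ?_, ?_⟩
  · have := continuous_ballRetr (n := n)
    refine Continuous.if_le (by fun_prop) (by fun_prop) (by fun_prop) (by fun_prop) ?_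
    intro p hp
    rw [hp, H1 _ (norm_ballRetr_le _), sub_self, K0 _ (norm_ballRetr_le _)]
  · intro x hx
    simp [ballRetr_of_le hx, H0 x hx]
  · intro x hx
    simp only [ContinuousMap.coe_mk]
    rw [if_neg (by norm_num), ballRetr_of_le hx]
    norm_num [K1 x hx]
  · intro x t hx ht
    simp only [ContinuousMap.coe_mk]
    rw [ballRetr_of_le hx]
    split_ifs with h
    · exact HY _ _ hx ⟨by linarith [ht.1], h⟩
    · exact KY _ _ hx ⟨by linarith, by linarith [ht.2]⟩
  · intro x t hx ht
    simp only [ContinuousMap.coe_mk]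
    rw [ballRetr_of_le hx.le]
    split_ifs with h
    · exact HA _ _ hx ⟨by linarith [ht.1], h⟩
    · exact KA _ _ hx ⟨by linarith, by linarith [ht.2]⟩

/-- Surjectivity on `π_n`, `n ≥ 1`, in cube coordinates: a map of `[-1,1]^n` to `Y` that is constant
on the boundary, with value in `A`, is homotopic as a map of pairs to a map into `A`. -/
theorem whe_surj (hAY : A ⊆ Y) (h : IsWeakHomotopyEquiv (fun s : A => (⟨s, hAY s.2⟩ : Y)))
    {n : ℕ} (hn : 1 ≤ n) {a0 : Z} (ha0 : a0 ∈ A) (L : C(Fin n → ℝ, Z))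
    (hLY : ∀ x, ‖x‖ ≤ 1 → L x ∈ Y) (hL : ∀ x, ‖x‖ = 1 → L x = a0) :
    ∃ c : C(Fin n → ℝ, Z), (∀ x, c x ∈ A) ∧ PairHtpy A Y L c := by
  obtain ⟨hf, -, hpi⟩ := h
  let q : GenLoop (Fin n) Y ⟨a0, hAY ha0⟩ :=
    ⟨⟨fun y => ⟨L (ofCube y), hLY _ (norm_ofCube_le y)⟩,
      (L.continuous.comp continuous_ofCube).subtype_mk _⟩,
      fun y hy => Subtype.ext (hL _ ((mem_boundary_iff y).1 hy))⟩
  obtain ⟨P, hP⟩ := (hpi n hn ⟨a0, ha0⟩).2 (Quotient.mk _ q)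
  obtain ⟨p, rfl⟩ := Quotient.exists_rep P
  obtain ⟨K⟩ : GenLoop.Homotopic q (genLoopMap ⟨_, hf⟩ p) := (Quotient.exact hP).symm
  refine ⟨⟨fun x => (p.1 (toCube x) : A), continuous_subtype_val.comp
    (p.1.continuous.comp continuous_toCube)⟩, fun x => (p.1 (toCube x)).2,
    ⟨fun z => (K (Set.projIcc 0 1 zero_le_one z.2, toCube z.1) : Y), ?_⟩, ?_, ?_, ?_, ?_⟩
  · have := continuous_toCube (n := n)
    refine continuous_subtype_val.comp (K.continuous.comp ?_)
    exact (continuous_projIcc.comp continuous_snd).prodMk (this.comp continuous_fst)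
  · intro x hx
    simp only [ContinuousMap.coe_mk]
    rw [Set.projIcc_left]
    erw [K.apply_zero]
    exact congrArg L (ofCube_toCube hx)
  · intro x hx
    simp only [ContinuousMap.coe_mk]
    rw [Set.projIcc_right]
    erw [K.apply_one]
    rfl
  · intro x t _ _
    exact Subtype.coe_prop _
  · intro x t hx _
    have := K.eq_fst (Set.projIcc 0 1 zero_le_one t) (toCube_mem_boundary hx)
    simp only [ContinuousMap.coe_mk]
    rw [this]
    have h2 : (q.1 (toCube x) : Z) = L (ofCube (toCube x)) := rfl
    rw [h2, ofCube_toCube hx.le, hL x hx]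
    exact ha0

/-- Injectivity on `π_m`, in cube coordinates: a nullhomotopy rel boundary in `Y` of an `m`-dimensional
loop in `A` can be replaced by one in `A`.  For `m = 0` this is injectivity on path components. -/
theorem whe_inj (hAY : A ⊆ Y) (h : IsWeakHomotopyEquiv (fun s : A => (⟨s, hAY s.2⟩ : Y)))
    {m : ℕ} {a0 : Z} (ha0 : a0 ∈ A) (K : C((Fin m → ℝ) × ℝ, Z))
    (hKY : ∀ x s, ‖x‖ ≤ 1 → s ∈ Set.Icc (0 : ℝ) 1 → K (x, s) ∈ Y)
    (hK0 : ∀ x, ‖x‖ ≤ 1 → K (x, 0) = a0) (hK1 : ∀ x, ‖x‖ ≤ 1 → K (x, 1) ∈ A)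
    (hKb : ∀ x s, ‖x‖ = 1 → s ∈ Set.Icc (0 : ℝ) 1 → K (x, s) = a0) :
    ∃ K' : C((Fin m → ℝ) × ℝ, Z), (∀ x s, K' (x, s) ∈ A) ∧ (∀ x, ‖x‖ ≤ 1 → K' (x, 0) = a0) ∧
      (∀ x, ‖x‖ ≤ 1 → K' (x, 1) = K (x, 1)) ∧ (∀ x s, ‖x‖ = 1 → K' (x, s) = a0) := by
  obtain ⟨hf, hpi0, hpi⟩ := h
  rcases Nat.eq_zero_or_pos m with rfl | hm
  · have hz : ∀ x : Fin 0 → ℝ, ‖x‖ ≤ 1 := fun x => by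
      rw [Subsingleton.elim x 0, norm_zero]; exact zero_le_one
    let a : A := ⟨a0, ha0⟩
    let a' : A := ⟨K (0, 1), hK1 0 (hz 0)⟩
    have hj : Joined (⟨a0, hAY ha0⟩ : Y) ⟨K (0, 1), hAY a'.2⟩ :=
      ⟨{ toFun := fun t => ⟨K (0, t), hKY _ _ (hz 0) t.2⟩
         continuous_toFun := by
           refine Continuous.subtype_mk ?_ _
           fun_prop
         source' := Subtype.ext (hK0 0 (hz 0))
         target' := rfl }⟩
    have heq : pi0Map ⟨_, hf⟩ (Quotient.mk _ a) = pi0Map ⟨_, hf⟩ (Quotient.mk _ a') :=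
      Quotient.sound hj
    obtain ⟨γ⟩ : Joined a a' := Quotient.exact (hpi0.1 heq)
    refine ⟨⟨fun p => (γ.extend p.2 : A), ?_⟩, fun x s => Subtype.coe_prop _, ?_, ?_, ?_⟩
    · exact continuous_subtype_val.comp (γ.continuous_extend.comp continuous_snd)
    · intro x _
      simp [a]
    · intro x _
      rw [Subsingleton.elim x 0]
      simp [a']
    · intro x s hx
      rw [Subsingleton.elim x 0, norm_zero] at hx
      norm_num at hx
  · let p : GenLoop (Fin m) A ⟨a0, ha0⟩ :=
      ⟨⟨fun y => ⟨K (ofCube y, 1), hK1 _ (norm_ofCube_le y)⟩,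
        Continuous.subtype_mk (K.continuous.comp (continuous_ofCube.prodMk continuous_const)) _⟩,
        fun y hy => Subtype.ext (hKb _ _ ((mem_boundary_iff y).1 hy) (by simp))⟩
    have hh : GenLoop.Homotopic (genLoopMap ⟨_, hf⟩ (GenLoop.const : GenLoop (Fin m) A ⟨a0, ha0⟩))
        (genLoopMap ⟨_, hf⟩ p) :=
      ⟨{ toFun := fun z => ⟨K (ofCube z.2, z.1), hKY _ _ (norm_ofCube_le _) z.1.2⟩
         continuous_toFun := by
           refine Continuous.subtype_mk (K.continuous.comp ?_) _
           exact (continuous_ofCube.comp continuous_snd).prodMk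
             (continuous_subtype_val.comp continuous_fst)
         map_zero_left := fun y => Subtype.ext (hK0 _ (norm_ofCube_le y))
         map_one_left := fun y => rfl
         prop' := fun t y hy => Subtype.ext (hKb _ _ ((mem_boundary_iff y).1 hy) t.2) }⟩
    have heq : piMap m ⟨_, hf⟩ _ (Quotient.mk _ GenLoop.const) =
        piMap m ⟨_, hf⟩ _ (Quotient.mk _ p) := Quotient.sound hh
    obtain ⟨N⟩ : GenLoop.Homotopic GenLoop.const p := Quotient.exact ((hpi m hm _).1 heq)
    refine ⟨⟨fun z => (N (Set.projIcc 0 1 zero_le_one z.2, toCube z.1) : A), ?_⟩,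
      fun x s => Subtype.coe_prop _, ?_, ?_, ?_⟩
    · refine continuous_subtype_val.comp (N.continuous.comp ?_)
      exact (continuous_projIcc.comp continuous_snd).prodMk (continuous_toCube.comp continuous_fst)
    · intro x hx
      simp only [ContinuousMap.coe_mk]
      rw [Set.projIcc_left]
      erw [N.apply_zero]
      rfl
    · intro x hx
      simp only [ContinuousMap.coe_mk]
      rw [Set.projIcc_right]
      erw [N.apply_one]
      exact congrArg (fun w => K (w, 1)) (ofCube_toCube hx)
    · intro x t hx
      have := N.eq_fst (Set.projIcc 0 1 zero_le_one t) (toCube_mem_boundary hx)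
      simp only [ContinuousMap.coe_mk]
      rw [this]
      rfl

end

/-! ### Weak equivalences are compressible -/

theorem norm_succ {m : ℕ} (x : Fin (m + 1) → ℝ) : ‖x‖ = max |x 0| ‖Fin.tail x‖ := by
  refine le_antisymm ((pi_norm_le_iff_of_nonneg (by positivity)).2 fun i => ?_)
    (max_le (norm_le_pi_norm x 0)
      ((pi_norm_le_iff_of_nonneg (norm_nonneg _)).2 fun i => norm_le_pi_norm x i.succ))
  refine Fin.cases (le_max_left _ _) (fun j => le_max_of_le_right ?_) i
  exact norm_le_pi_norm (Fin.tail x) j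

/-- A parameter measuring how far a point lies inside the collar of
`[-1,1]^m × {0} ∪ ∂[-1,1]^m × [0,1]` that is collapsed at time `t`. -/
noncomputable def collarDepth {m : ℕ} (p : (Fin m → ℝ) × ℝ) (t : ℝ) : ℝ :=
  max 0 (max ((1 + t) * ‖p.1‖) ((1 + t) * (1 - p.2)) - 1)

/-- A homotopy of `[-1,1]^m × [0,1]`, preserving the boundary, from the identity to a map that
sends `[-1,1]^m × {0} ∪ ∂[-1,1]^m × [0,1]` to a point: the middle of the top face is
expanded over everything, while the collar slides down the sides and into the centre of the
bottom face. -/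
noncomputable def collarSlide {m : ℕ} (p : (Fin m → ℝ) × ℝ) (t : ℝ) : (Fin m → ℝ) × ℝ :=
  (min 1 (2 - 2 * collarDepth p t) • ballRetr ((1 + t) • p.1),
    max 0 (max 0 (1 - (1 + t) * (1 - p.2)) - 2 * collarDepth p t))

section
variable {m : ℕ}

theorem continuous_collarSlide :
    Continuous fun q : ((Fin m → ℝ) × ℝ) × ℝ => collarSlide q.1 q.2 := by
  unfold collarSlide collarDepth
  have := continuous_ballRetr (n := m)
  fun_prop

variable {y : Fin m → ℝ} {s t : ℝ}

theorem collarDepth_mem (hy : ‖y‖ ≤ 1) (hs : s ∈ Set.Icc (0 : ℝ) 1) (ht : t ∈ Set.Icc (0 : ℝ) 1) :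
    collarDepth (y, s) t ∈ Set.Icc (0 : ℝ) 1 := by
  obtain ⟨hs0, hs1⟩ := hs
  obtain ⟨ht0, ht1⟩ := ht
  have := norm_nonneg y
  refine ⟨le_max_left _ _, max_le zero_le_one ?_⟩
  rw [sub_le_iff_le_add]
  exact max_le (by simp only; nlinarith) (by simp only; nlinarith)

theorem collarSlide_mem (hy : ‖y‖ ≤ 1) (hs : s ∈ Set.Icc (0 : ℝ) 1) (ht : t ∈ Set.Icc (0 : ℝ) 1) :
    ‖(collarSlide (y, s) t).1‖ ≤ 1 ∧ (collarSlide (y, s) t).2 ∈ Set.Icc (0 : ℝ) 1 := by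
  obtain ⟨hd0, hd1⟩ := collarDepth_mem hy hs ht
  refine ⟨?_, le_max_left _ _, max_le zero_le_one ?_⟩
  · have h := norm_ballRetr_le ((1 + t) • y)
    have h0 : 0 ≤ min 1 (2 - 2 * collarDepth (y, s) t) := le_min zero_le_one (by linarith)
    have h1 : min 1 (2 - 2 * collarDepth (y, s) t) ≤ 1 := min_le_left _ _
    simp only [collarSlide, norm_smul] at *
    rw [Real.norm_of_nonneg h0]
    exact mul_le_one₀ h1 (norm_nonneg _) h
  · have : max 0 (1 - (1 + t) * (1 - s)) ≤ 1 := max_le zero_le_one (by nlinarith [hs.2, ht.1])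
    simp only
    linarith

theorem collarSlide_boundary (hy : ‖y‖ ≤ 1) (hs : s ∈ Set.Icc (0 : ℝ) 1) (ht : t ∈ Set.Icc (0 : ℝ) 1)
    (hb : ‖y‖ = 1 ∨ s = 0 ∨ s = 1) :
    ‖(collarSlide (y, s) t).1‖ = 1 ∨ (collarSlide (y, s) t).2 = 0 ∨
      (collarSlide (y, s) t).2 = 1 := by
  obtain ⟨hd0, hd1⟩ := collarDepth_mem hy hs ht
  obtain ⟨hs0, hs1⟩ := hs
  obtain ⟨ht0, ht1⟩ := ht
  have hr : 1 ≤ (1 + t) * ‖y‖ → ‖ballRetr ((1 + t) • y)‖ = 1 := by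
    intro h
    have hn : ‖(1 + t) • y‖ = (1 + t) * ‖y‖ := by
      rw [norm_smul, Real.norm_of_nonneg (by linarith)]
    rw [ballRetr, hn, max_eq_right h, norm_smul, hn, norm_inv, Real.norm_of_nonneg (by linarith),
      inv_mul_cancel₀ (by linarith)]
  have h2 : 1 ≤ (1 + t) * (1 - s) → (collarSlide (y, s) t).2 = 0 := by
    intro h
    refine max_eq_left ?_
    rw [max_eq_left (by simp only; linarith)]
    linarith
  have h1 : 1 ≤ (1 + t) * ‖y‖ → ‖(collarSlide (y, s) t).1‖ = 1 ∨ (collarSlide (y, s) t).2 = 0 := by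
    intro h
    rcases le_total (collarDepth (y, s) t) (1 / 2) with hd | hd
    · left
      simp only [collarSlide]
      rw [min_eq_left (by linarith), one_smul, hr h]
    · right
      refine max_eq_left ?_
      have : max 0 (1 - (1 + t) * (1 - s)) ≤ 1 := max_le zero_le_one (by nlinarith)
      simp only
      linarith
  rcases hb with h | h | h
  · rcases h1 (by rw [h]; linarith) with h | h
    · exact Or.inl h
    · exact Or.inr (Or.inl h)
  · exact Or.inr (Or.inl (h2 (by rw [h]; linarith)))
  · rcases le_total 1 ((1 + t) * ‖y‖) with h' | h'
    · rcases h1 h' with h | h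
      · exact Or.inl h
      · exact Or.inr (Or.inl h)
    · right; right
      have hd : collarDepth (y, s) t = 0 := by
        refine max_eq_left ?_
        rw [sub_nonpos]
        exact max_le h' (by simp [h])
      rw [h] at hd ⊢
      simp [collarSlide, hd]

theorem collarSlide_zero (hy : ‖y‖ ≤ 1) (hs : s ∈ Set.Icc (0 : ℝ) 1) :
    collarSlide (y, s) 0 = (y, s) := by
  have hd : collarDepth (y, s) 0 = 0 := by
    refine max_eq_left ?_
    rw [sub_nonpos]
    exact max_le (by simpa using hy) (by simp [hs.1])
  simp [collarSlide, hd, ballRetr_of_le hy, hs.1]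

theorem collarSlide_one (hy : ‖y‖ ≤ 1) (hs : s ∈ Set.Icc (0 : ℝ) 1)
    (hb : ‖y‖ = 1 ∨ s = 0) : collarSlide (y, s) 1 = (0, 0) := by
  have hd : collarDepth (y, s) 1 = 1 := by
    refine le_antisymm (collarDepth_mem hy hs (by simp)).2 (le_max_of_le_right ?_)
    rw [le_sub_iff_add_le]
    rcases hb with h | h
    · exact le_max_of_le_left (by simp [h])
    · exact le_max_of_le_right (by simp [h])
  have h1 : max 0 (1 - (1 + 1) * (1 - s)) ≤ 1 := max_le zero_le_one (by linarith [hs.2])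
  simp only [collarSlide, hd]
  refine Prod.ext ?_ (max_eq_left ?_)
  · norm_num
  · linarith

end

/-- An inclusion of subspaces that is a weak homotopy equivalence is compressible in every
dimension. -/
theorem compress_of_whe {Z : Type*} [TopologicalSpace Z] {A Y : Set Z} (hAY : A ⊆ Y)
    (h : IsWeakHomotopyEquiv (fun s : A => (⟨s, hAY s.2⟩ : Y))) (n : ℕ) : Compress A Y n := by
  rcases n with _ | m
  · intro b hbY hbA
    obtain ⟨hf, hpi0, -⟩ := h
    have hz : ∀ x : Fin 0 → ℝ, ‖x‖ ≤ 1 := fun x => by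
      rw [Subsingleton.elim x 0, norm_zero]; exact zero_le_one
    obtain ⟨P, hP⟩ := hpi0.2 (Quotient.mk _ ⟨b 0, hbY 0 (hz 0)⟩)
    obtain ⟨a, rfl⟩ := Quotient.exists_rep P
    obtain ⟨γ⟩ : Joined (⟨b 0, hbY 0 (hz 0)⟩ : Y) ⟨a, hAY a.2⟩ := (Quotient.exact hP).symm
    refine ⟨⟨fun p => (γ.extend p.2 : Y), ?_⟩, ?_, fun x t _ _ => Subtype.coe_prop _, ?_, ?_⟩
    · exact continuous_subtype_val.comp (γ.continuous_extend.comp continuous_snd)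
    · intro x _
      rw [Subsingleton.elim x 0]
      simp
    · intro x t hx
      rw [Subsingleton.elim x 0, norm_zero] at hx
      norm_num at hx
    · intro x _
      simp
  intro b hbY hbA
  suffices hs : ∃ c : C(Fin (m + 1) → ℝ, Z), (∀ x, c x ∈ A) ∧ PairHtpy A Y b c by
    obtain ⟨c, hc, H, H0, H1, HY, HA⟩ := hs
    exact ⟨H, H0, HY, HA, fun x hx => by rw [H1 x hx]; exact hc x⟩
  -- Split off the first coordinate, rescaled to `[0, 1]`.
  let ψ : (Fin (m + 1) → ℝ) → (Fin m → ℝ) × ℝ := fun x => (Fin.tail x, (x 0 + 1) / 2)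
  let χ : (Fin m → ℝ) × ℝ → (Fin (m + 1) → ℝ) := fun p => Fin.cons (2 * p.2 - 1) p.1
  have hψ : Continuous ψ := by
    have : Continuous fun x : Fin (m + 1) → ℝ => Fin.tail x := continuous_pi fun i => by
      unfold Fin.tail; fun_prop
    exact this.prodMk (by fun_prop)
  have hχ : Continuous χ := by
    refine continuous_pi fun i => Fin.cases ?_ (fun j => ?_) i
    · simp only [χ, Fin.cons_zero]; fun_prop
    · simp only [χ, Fin.cons_succ]; fun_prop
  have hχψ : ∀ x, χ (ψ x) = x := fun x => by
    simp only [χ, ψ]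
    rw [show 2 * ((x 0 + 1) / 2) - 1 = x 0 by ring, Fin.cons_self_tail]
  have hχn : ∀ p, ‖χ p‖ = max |2 * p.2 - 1| ‖p.1‖ := fun p => by
    rw [norm_succ]; rfl
  have hχle : ∀ p, ‖p.1‖ ≤ 1 → p.2 ∈ Set.Icc (0 : ℝ) 1 → ‖χ p‖ ≤ 1 := fun p h1 h2 => by
    rw [hχn]
    exact max_le (abs_le.2 ⟨by linarith [h2.1], by linarith [h2.2]⟩) h1
  have hχbd : ∀ p, ‖p.1‖ ≤ 1 → p.2 ∈ Set.Icc (0 : ℝ) 1 → (‖p.1‖ = 1 ∨ p.2 = 0 ∨ p.2 = 1) →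
      ‖χ p‖ = 1 := fun p h1 h2 h3 => by
    refine le_antisymm (hχle p h1 h2) ?_
    rw [hχn]
    rcases h3 with h | h | h
    · exact le_max_of_le_right h.ge
    · exact le_max_of_le_left (by rw [h]; norm_num)
    · exact le_max_of_le_left (by rw [h]; norm_num)
  have hψle : ∀ x, ‖x‖ ≤ 1 → ‖(ψ x).1‖ ≤ 1 ∧ (ψ x).2 ∈ Set.Icc (0 : ℝ) 1 := fun x hx => by
    rw [norm_succ] at hx
    have h1 := abs_le.1 ((le_max_left _ _).trans hx)
    exact ⟨(le_max_right _ _).trans hx, by simp only [ψ]; linarith, by simp only [ψ]; linarith⟩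
  have hψbd : ∀ x, ‖x‖ = 1 → (‖(ψ x).1‖ = 1 ∨ (ψ x).2 = 0 ∨ (ψ x).2 = 1) := fun x hx => by
    rw [norm_succ] at hx
    rcases max_choice |x 0| ‖Fin.tail x‖ with h | h
    · rw [h] at hx
      rcases (abs_eq zero_le_one).1 hx with h | h
      · right; right; simp only [ψ]; rw [h]; norm_num
      · right; left; simp only [ψ]; rw [h]; norm_num
    · rw [h] at hx; exact Or.inl hx
  have hle0 : ‖(0 : Fin m → ℝ)‖ ≤ 1 := by rw [norm_zero]; exact zero_le_one
  have hI0 : (0 : ℝ) ∈ Set.Icc (0 : ℝ) 1 := by simp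
  have hI1 : (1 : ℝ) ∈ Set.Icc (0 : ℝ) 1 := by simp
  -- Stage 1: make the map constant on all faces but the top one.
  let a0 : Z := b (χ (0, 0))
  have ha0 : a0 ∈ A := hbA _ (hχbd _ hle0 hI0 (by simp))
  let b' : C((Fin m → ℝ) × ℝ, Z) := ⟨fun p => b (χ (collarSlide p 1)),
    b.continuous.comp (hχ.comp (continuous_collarSlide.comp (continuous_id.prodMk
      continuous_const)))⟩
  have hb'Y : ∀ y s, ‖y‖ ≤ 1 → s ∈ Set.Icc (0 : ℝ) 1 → b' (y, s) ∈ Y := fun y s hy hs => by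
    obtain ⟨h1, h2⟩ := collarSlide_mem hy hs hI1
    exact hbY _ (hχle _ h1 h2)
  have hb'A : ∀ y s, ‖y‖ ≤ 1 → s ∈ Set.Icc (0 : ℝ) 1 → (‖y‖ = 1 ∨ s = 0 ∨ s = 1) →
      b' (y, s) ∈ A := fun y s hy hs h => by
    obtain ⟨h1, h2⟩ := collarSlide_mem hy hs hI1
    exact hbA _ (hχbd _ h1 h2 (collarSlide_boundary hy hs hI1 h))
  have hb'0 : ∀ y s, ‖y‖ ≤ 1 → s ∈ Set.Icc (0 : ℝ) 1 → (‖y‖ = 1 ∨ s = 0) → b' (y, s) = a0 :=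
    fun y s hy hs h => by
      show b (χ (collarSlide (y, s) 1)) = _
      rw [collarSlide_one hy hs h]
  have st1 : PairHtpy A Y b (b'.comp ⟨ψ, hψ⟩) := by
    refine ⟨⟨fun z => b (χ (collarSlide (ψ z.1) z.2)), ?_⟩, ?_, fun x _ => rfl, ?_, ?_⟩
    · exact b.continuous.comp (hχ.comp (continuous_collarSlide.comp
        ((hψ.comp continuous_fst).prodMk continuous_snd)))
    · intro x hx
      obtain ⟨h1, h2⟩ := hψle x hx
      show b (χ (collarSlide ((ψ x).1, (ψ x).2) 0)) = b x
      rw [collarSlide_zero h1 h2]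
      exact congrArg b (hχψ x)
    · intro x t hx ht
      obtain ⟨h1, h2⟩ := hψle x hx
      obtain ⟨h3, h4⟩ := collarSlide_mem h1 h2 ht
      exact hbY _ (hχle _ h3 h4)
    · intro x t hx ht
      obtain ⟨h1, h2⟩ := hψle x hx.le
      obtain ⟨h3, h4⟩ := collarSlide_mem h1 h2 ht
      exact hbA _ (hχbd _ h3 h4 (collarSlide_boundary h1 h2 ht (hψbd x hx)))
  -- Stage 2: injectivity on `π_m` provides a nullhomotopy of the top face in `A`; stack it.
  obtain ⟨K, KA, K0, K1, Kb⟩ := whe_inj hAY h ha0 b' hb'Y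
    (fun x hx => hb'0 x 0 hx hI0 (Or.inr rfl))
    (fun x hx => hb'A x 1 hx hI1 (Or.inr (Or.inr rfl)))
    (fun x s hx hs => hb'0 x s hx.le hs (Or.inl hx))
  let S : C((Fin (m + 1) → ℝ) × ℝ, Z) :=
    ⟨fun z => if (1 + z.2) * (ψ z.1).2 ≤ 1 then b' (ballRetr (ψ z.1).1, (1 + z.2) * (ψ z.1).2)
      else K (ballRetr (ψ z.1).1, 2 - (1 + z.2) * (ψ z.1).2), by
      have := continuous_ballRetr (n := m)
      refine Continuous.if_le (by fun_prop) (by fun_prop) (by fun_prop) (by fun_prop) ?_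
      intro z hz
      rw [hz, ← K1 _ (norm_ballRetr_le _)]
      norm_num⟩
  have hS : ∀ x t, ‖x‖ ≤ 1 → S (x, t) = if (1 + t) * (ψ x).2 ≤ 1 then
      b' ((ψ x).1, (1 + t) * (ψ x).2) else K ((ψ x).1, 2 - (1 + t) * (ψ x).2) := fun x t hx => by
    show (if _ then _ else _) = _
    rw [ballRetr_of_le (hψle x hx).1]
  have hSY : ∀ x t, ‖x‖ ≤ 1 → t ∈ Set.Icc (0 : ℝ) 1 → S (x, t) ∈ Y := fun x t hx ht => by
    obtain ⟨h1, h2⟩ := hψle x hx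
    rw [hS x t hx]
    split_ifs with hc
    · exact hb'Y _ _ h1 ⟨mul_nonneg (by linarith [ht.1]) h2.1, hc⟩
    · exact hAY (KA _ _)
  have st2 : PairHtpy A Y (b'.comp ⟨ψ, hψ⟩)
      (S.comp ⟨fun x => (x, 1), by fun_prop⟩) := by
    refine ⟨S, ?_, fun x _ => rfl, hSY, ?_⟩
    · intro x hx
      obtain ⟨h1, h2⟩ := hψle x hx
      rw [hS x 0 hx, if_pos (by linarith [h2.2])]
      simp
    · intro x t hx ht
      obtain ⟨h1, h2⟩ := hψle x hx.le
      rw [hS x t hx.le]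
      split_ifs with hc
      · refine hb'A _ _ h1 ⟨mul_nonneg (by linarith [ht.1]) h2.1, hc⟩ ?_
        rcases hψbd x hx with h | h | h
        · exact Or.inl h
        · right; left; rw [h, mul_zero]
        · right; right
          rw [h] at hc ⊢
          linarith [ht.1]
      · exact KA _ _
  -- Stage 3: the result is a loop in `Y`, and `π_(m+1)` is surjective.
  obtain ⟨c, hc, st3⟩ := whe_surj hAY h (Nat.succ_le_succ (Nat.zero_le m)) ha0
    (S.comp ⟨fun x => (x, 1), by fun_prop⟩) (fun x hx => hSY x 1 hx hI1) (fun x hx => by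
      obtain ⟨h1, h2⟩ := hψle x hx.le
      show S (x, 1) = a0
      rw [hS x 1 hx.le]
      rcases hψbd x hx with h | h | h
      · split_ifs with hc
        · exact hb'0 _ _ h1 ⟨mul_nonneg (by norm_num) h2.1, hc⟩ (Or.inl h)
        · exact Kb _ _ h
      · rw [h, if_pos (by norm_num), mul_zero]
        exact hb'0 _ _ h1 hI0 (Or.inr rfl)
      · rw [h, if_neg (by norm_num)]
        norm_num
        exact K0 _ h1)
  exact ⟨c, hc, (st1.trans st2).trans st3⟩

/-! ### Extending homotopies over the cells of a grid -/

section Grid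

/-- The closed box in `ℝ^n` with integral corners `a` and `b`. -/
def ibox {n : ℕ} (a b : Fin n → ℤ) : Set (Fin n → ℝ) :=
  {x | ∀ i, (a i : ℝ) ≤ x i ∧ x i ≤ b i}

/-- The relative boundary of a box: the degenerate directions are ignored. -/
def iboxBd {n : ℕ} (a b : Fin n → ℤ) : Set (Fin n → ℝ) :=
  {x | x ∈ ibox a b ∧ ∃ i, a i < b i ∧ (x i = a i ∨ x i = b i)}

theorem isClosed_ibox {n : ℕ} (a b : Fin n → ℤ) : IsClosed (ibox a b) := by
  have : ibox a b = ⋂ i, {x : Fin n → ℝ | (a i : ℝ) ≤ x i} ∩ {x : Fin n → ℝ | x i ≤ (b i : ℝ)} := by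
    ext x; simp [ibox]
  rw [this]
  exact isClosed_iInter fun i => (isClosed_le (by fun_prop) (by fun_prop)).inter
    (isClosed_le (by fun_prop) (by fun_prop))

theorem isClosed_iboxBd {n : ℕ} (a b : Fin n → ℤ) : IsClosed (iboxBd a b) := by
  have : iboxBd a b = ibox a b ∩ ⋃ i ∈ {i | a i < b i},
      ({x : Fin n → ℝ | x i = (a i : ℝ)} ∪ {x : Fin n → ℝ | x i = (b i : ℝ)}) := by
    ext x; simp [iboxBd]
  rw [this]
  refine (isClosed_ibox a b).inter ((Set.toFinite _).isClosed_biUnion fun i _ => ?_)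
  exact (isClosed_eq (by fun_prop) (by fun_prop)).union (isClosed_eq (by fun_prop) (by fun_prop))

/-- The union of the unit cells of the integral grid that are contained in `U`. -/
def cellUnion {n : ℕ} (U : Set (Fin n → ℝ)) : Set (Fin n → ℝ) :=
  {x | ∃ z : Fin n → ℤ, x ∈ ibox z (fun i => z i + 1) ∧ ibox z (fun i => z i + 1) ⊆ U}

variable {Z : Type*} [TopologicalSpace Z]

/-- A homotopy over `P` starting at `f` and ending in `Fs`, which stays inside `G i` over every
grid cell contained in `U i`. -/
structure GridHtpy (Fs : Set Z) (G : ℕ → Set Z) (T : Finset ℕ) {n : ℕ} (f : (Fin n → ℝ) → Z)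
    (U : ℕ → Set (Fin n → ℝ)) (P : Set (Fin n → ℝ)) (φ : (Fin n → ℝ) × ℝ → Z) : Prop where
  cont : ContinuousOn φ (P ×ˢ Set.Icc 0 1)
  zero : ∀ x ∈ P, φ (x, 0) = f x
  mem : ∀ x ∈ P, ∀ t ∈ Set.Icc (0 : ℝ) 1, ∀ i ∈ T, x ∈ cellUnion (U i) → φ (x, t) ∈ G i
  one : ∀ x ∈ P, φ (x, 1) ∈ Fs

variable {Fs : Set Z} {G : ℕ → Set Z} {T : Finset ℕ} {n : ℕ} {f : (Fin n → ℝ) → Z}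
  {U : ℕ → Set (Fin n → ℝ)} {P Q : Set (Fin n → ℝ)} {φ ψ : (Fin n → ℝ) × ℝ → Z}

theorem GridHtpy.mono (h : GridHtpy Fs G T f U Q φ) (hPQ : P ⊆ Q) : GridHtpy Fs G T f U P φ :=
  ⟨h.cont.mono (Set.prod_mono hPQ subset_rfl), fun x hx => h.zero x (hPQ hx),
    fun x hx => h.mem x (hPQ hx), fun x hx => h.one x (hPQ hx)⟩

theorem GridHtpy.glue (hφ : GridHtpy Fs G T f U P φ) (hψ : GridHtpy Fs G T f U Q ψ)
    (hP : IsClosed P) (hQ : IsClosed Q)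
    (hag : ∀ x ∈ P, x ∈ Q → ∀ t ∈ Set.Icc (0 : ℝ) 1, φ (x, t) = ψ (x, t)) :
    ∃ χ, GridHtpy Fs G T f U (P ∪ Q) χ ∧
      (∀ x ∈ P, ∀ t ∈ Set.Icc (0 : ℝ) 1, χ (x, t) = φ (x, t)) ∧
      (∀ x ∈ Q, ∀ t ∈ Set.Icc (0 : ℝ) 1, χ (x, t) = ψ (x, t)) := by
  classical
  let χ : (Fin n → ℝ) × ℝ → Z := fun p => if p.1 ∈ P then φ p else ψ p
  have h1 : ∀ x ∈ P, ∀ t ∈ Set.Icc (0 : ℝ) 1, χ (x, t) = φ (x, t) := fun x hx t _ => if_pos hx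
  have h2 : ∀ x ∈ Q, ∀ t ∈ Set.Icc (0 : ℝ) 1, χ (x, t) = ψ (x, t) := fun x hx t ht => by
    by_cases h : x ∈ P
    · rw [h1 x h t ht, hag x h hx t ht]
    · exact if_neg h
  have I0 : (0 : ℝ) ∈ Set.Icc (0 : ℝ) 1 := by simp
  have I1 : (1 : ℝ) ∈ Set.Icc (0 : ℝ) 1 := by simp
  refine ⟨χ, ⟨?_, ?_, ?_, ?_⟩, h1, h2⟩
  · rw [Set.union_prod]
    refine ContinuousOn.union_of_isClosed (hφ.cont.congr fun p hp => h1 _ hp.1 _ hp.2)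
      (hψ.cont.congr fun p hp => h2 _ hp.1 _ hp.2) (hP.prod isClosed_Icc) (hQ.prod isClosed_Icc)
  · rintro x (hx | hx)
    · rw [h1 x hx 0 I0, hφ.zero x hx]
    · rw [h2 x hx 0 I0, hψ.zero x hx]
  · rintro x (hx | hx) t ht
    · rw [h1 x hx t ht]; exact hφ.mem x hx t ht
    · rw [h2 x hx t ht]; exact hψ.mem x hx t ht
  · rintro x (hx | hx)
    · rw [h1 x hx 1 I1]; exact hφ.one x hx
    · rw [h2 x hx 1 I1]; exact hψ.one x hx

/-- Extension of grid homotopies over a single cell of the grid, of any dimension, from its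
boundary. -/
theorem gridHtpy_cell (hcomp : ∀ S : Finset ℕ, S.Nonempty → ∀ k,
      Compress (Fs ∩ ⋂ i ∈ S, G i) (⋂ i ∈ S, G i) k)
    (hf : Continuous f) (hU : ∀ i ∈ T, ∀ x ∈ U i, f x ∈ G i)
    (hcov : ∀ z : Fin n → ℤ, ∃ i ∈ T, ibox z (fun j => z j + 1) ⊆ U i)
    (a b : Fin n → ℤ) (hab : ∀ i, a i ≤ b i) (hba : ∀ i, b i ≤ a i + 1)
    (hφ : GridHtpy Fs G T f U (iboxBd a b) φ) :
    ∃ ψ, GridHtpy Fs G T f U (ibox a b) ψ ∧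
      ∀ x ∈ iboxBd a b, ∀ t ∈ Set.Icc (0 : ℝ) 1, ψ (x, t) = φ (x, t) := by
  classical
  -- `e` parametrizes the cell by the standard cube of its dimension, with inverse `p`.
  let en : {i // a i < b i} ≃ Fin (Fintype.card {i // a i < b i}) := Fintype.equivFin _
  let k := Fintype.card {i // a i < b i}
  let e : (Fin k → ℝ) → (Fin n → ℝ) := fun y i =>
    if h : a i < b i then a i + (y (en ⟨i, h⟩) + 1) / 2 else a i
  let p : (Fin n → ℝ) → (Fin k → ℝ) := fun x j =>
    2 * (x (en.symm j).1 - a (en.symm j).1) - 1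
  have hb1 : ∀ i, a i < b i → (b i : ℝ) = a i + 1 := fun i h => by
    have : b i = a i + 1 := le_antisymm (hba i) h
    rw [this]; push_cast; ring
  have hb0 : ∀ i, ¬ a i < b i → b i = a i := fun i h => le_antisymm (not_lt.1 h) (hab i)
  have he : Continuous e := continuous_pi fun i => by
    by_cases h : a i < b i
    · simp only [e, dif_pos h]; fun_prop
    · simp only [e, dif_neg h]; fun_prop
  have hp : Continuous p := continuous_pi fun j => by simp only [p]; fun_prop
  have hpe : ∀ y, p (e y) = y := fun y => by
    funext j
    have h := (en.symm j).2
    simp only [p, e, dif_pos h]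
    rw [show en ⟨(en.symm j).1, h⟩ = j from en.apply_symm_apply j]
    ring
  have hep : ∀ x ∈ ibox a b, e (p x) = x := fun x hx => by
    funext i
    by_cases h : a i < b i
    · simp only [e, p, dif_pos h, Equiv.symm_apply_apply]; ring
    · simp only [e, dif_neg h]
      refine le_antisymm (hx i).1 ?_
      rw [← hb0 i h]; exact (hx i).2
  have hebox : ∀ y, ‖y‖ ≤ 1 → e y ∈ ibox a b := fun y hy i => by
    by_cases h : a i < b i
    · have := abs_le.1 ((norm_le_pi_norm y (en ⟨i, h⟩)).trans hy)
      simp only [e, dif_pos h, hb1 i h]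
      constructor <;> linarith
    · simp only [e, dif_neg h, hb0 i h]
      exact ⟨le_rfl, le_rfl⟩
  have hpabs : ∀ x ∈ ibox a b, ∀ j, |p x j| ≤ 1 := fun x hx j => by
    have h1 := hx (en.symm j).1
    have h2 := hb1 _ (en.symm j).2
    exact abs_le.2 ⟨by simp only [p]; linarith, by simp only [p]; linarith⟩
  have hpbox : ∀ x ∈ ibox a b, ‖p x‖ ≤ 1 := fun x hx =>
    (pi_norm_le_iff_of_nonneg zero_le_one).2 (hpabs x hx)
  have hpbd : ∀ x ∈ ibox a b, (‖p x‖ = 1 ↔ x ∈ iboxBd a b) := fun x hx => by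
    rw [pi_norm_eq_one_iff (hpabs x hx)]
    constructor
    · rintro ⟨j, hj⟩
      refine ⟨hx, (en.symm j).1, (en.symm j).2, ?_⟩
      have h2 := hb1 _ (en.symm j).2
      rcases (abs_eq zero_le_one).1 hj with h | h <;> simp only [p] at h
      · right; linarith
      · left; linarith
    · rintro ⟨-, i, hi, h⟩
      refine ⟨en ⟨i, hi⟩, (abs_eq zero_le_one).2 ?_⟩
      simp only [p, Equiv.symm_apply_apply]
      rcases h with h | h
      · right; rw [h]; ring
      · left; rw [h, hb1 i hi]; ring
  have hebd : ∀ y, ‖y‖ = 1 → e y ∈ iboxBd a b := fun y hy => by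
    rw [← hpbd _ (hebox y hy.le), hpe, hy]
  -- The indices whose constraint is felt in the interior of the cell.
  let S : Finset ℕ := T.filter fun i => ∃ z : Fin n → ℤ,
    ibox a b ⊆ ibox z (fun j => z j + 1) ∧ ibox z (fun j => z j + 1) ⊆ U i
  have hS : S.Nonempty := by
    obtain ⟨i, hi, h⟩ := hcov a
    refine ⟨i, Finset.mem_filter.2 ⟨hi, a, fun x hx j => ⟨(hx j).1, (hx j).2.trans ?_⟩, h⟩⟩
    exact_mod_cast hba j
  have hSU : ∀ i ∈ S, ∀ x ∈ ibox a b, x ∈ cellUnion (U i) ∧ x ∈ U i := fun i hi x hx => by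
    obtain ⟨-, z, h1, h2⟩ := Finset.mem_filter.1 hi
    exact ⟨⟨z, h1 hx, h2⟩, h2 (h1 hx)⟩
  have hST : ∀ i ∈ S, i ∈ T := fun i hi => (Finset.mem_filter.1 hi).1
  obtain ⟨H, Hc, H0, Hb, HY, HA⟩ := (hcomp S hS k).extend
    (fun q => if ‖q.1‖ = 1 then φ (e q.1, q.2) else f (e q.1)) (by
      rw [show {q : (Fin k → ℝ) × ℝ | (‖q.1‖ ≤ 1 ∧ q.2 = 0) ∨
          (‖q.1‖ = 1 ∧ q.2 ∈ Set.Icc (0 : ℝ) 1)} =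
        {q | ‖q.1‖ ≤ 1 ∧ q.2 = 0} ∪ {q | ‖q.1‖ = 1 ∧ q.2 ∈ Set.Icc (0 : ℝ) 1} from rfl]
      refine ContinuousOn.union_of_isClosed ?_ ?_ ?_ ?_
      · refine ContinuousOn.congr (f := fun q => f (e q.1)) (by fun_prop) ?_
        rintro ⟨y, t⟩ ⟨hy, ht⟩
        simp only at hy ht ⊢
        split_ifs with h
        · rw [ht, hφ.zero _ (hebd y h)]
        · rfl
      · refine ContinuousOn.congr (f := fun q => φ (e q.1, q.2)) ?_ ?_
        · exact hφ.cont.comp (by fun_prop) fun q hq => ⟨hebd _ hq.1, hq.2⟩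
        · rintro ⟨y, t⟩ ⟨hy, ht⟩
          exact if_pos hy
      · exact (isClosed_le continuous_fst.norm continuous_const).inter
          (isClosed_eq continuous_snd continuous_const)
      · exact (isClosed_eq continuous_fst.norm continuous_const).inter
          (isClosed_Icc.preimage continuous_snd))
    (fun y hy => by
      refine Set.mem_iInter₂.2 fun i hi => ?_
      simp only
      split_ifs with h
      · exact hφ.mem _ (hebd y h) 0 (by simp) i (hST i hi) (hSU i hi _ (hebox y hy)).1
      · exact hU i (hST i hi) _ (hSU i hi _ (hebox y hy)).2)
    (fun y t hy ht => by
      refine Set.mem_iInter₂.2 fun i hi => ?_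
      simp only [if_pos hy]
      exact hφ.mem _ (hebd y hy) t ht i (hST i hi) (hSU i hi _ (hebox y hy.le)).1)
    (fun y hy => by
      simp only [if_pos hy]
      refine ⟨hφ.one _ (hebd y hy), Set.mem_iInter₂.2 fun i hi => ?_⟩
      exact hφ.mem _ (hebd y hy) 1 (by simp) i (hST i hi) (hSU i hi _ (hebox y hy.le)).1)
  have hagree : ∀ x ∈ iboxBd a b, ∀ t ∈ Set.Icc (0 : ℝ) 1, H (p x, t) = φ (x, t) :=
    fun x hx t ht => by
      rw [Hb _ _ ((hpbd x hx.1).2 hx) ht]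
      simp only [if_pos ((hpbd x hx.1).2 hx), hep x hx.1]
  refine ⟨fun q => H (p q.1, q.2), ⟨?_, ?_, ?_, ?_⟩, hagree⟩
  · exact Hc.comp (by fun_prop) fun q hq => ⟨hpbox _ hq.1, hq.2⟩
  · intro x hx
    simp only
    rw [H0 _ (hpbox x hx)]
    simp only
    split_ifs with h
    · rw [hep x hx, hφ.zero _ ((hpbd x hx).1 h)]
    · rw [hep x hx]
  · intro x hx t ht i hi hxC
    simp only
    by_cases hbd : x ∈ iboxBd a b
    · rw [hagree x hbd t ht]
      exact hφ.mem x hbd t ht i hi hxC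
    -- An interior point lies only in grid cells that contain the whole cell.
    · have hiS : i ∈ S := by
        obtain ⟨z, hz, hzU⟩ := hxC
        refine Finset.mem_filter.2 ⟨hi, z, fun y hy j => ?_, hzU⟩
        have hxj := hx j
        have hzj := hz j
        have hyj := hy j
        push_cast at hzj ⊢
        by_cases h : a j < b j
        · have h1 : (a j : ℝ) ≠ x j := fun h' => hbd ⟨hx, j, h, Or.inl h'.symm⟩
          have h2 : x j ≠ b j := fun h' => hbd ⟨hx, j, h, Or.inr h'⟩
          have h3 := lt_of_le_of_ne hxj.1 h1
          have h4 := lt_of_le_of_ne hxj.2 h2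
          have h5 := hb1 j h
          have h6 : (z j : ℝ) < a j + 1 := by linarith
          have h7 : (a j : ℝ) < z j + 1 := by linarith
          have h8 : z j = a j := by
            have h6' : z j < a j + 1 := by exact_mod_cast h6
            have h7' : a j < z j + 1 := by exact_mod_cast h7
            omega
          rw [h8]
          constructor <;> linarith
        · have h1 : (b j : ℝ) = a j := by rw [hb0 j h]
          constructor <;> linarith
      exact Set.mem_iInter₂.1 (HY _ t (hpbox x hx) ht) i hiS
  · intro x hx
    exact (HA _ (hpbox x hx)).1

/-- Extension of grid homotopies over an arbitrary box from its boundary, cell by cell: the cells are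
organized by repeatedly dividing the box by a wall, over which the homotopy is extended first. -/
theorem gridHtpy_box (hcomp : ∀ S : Finset ℕ, S.Nonempty → ∀ k,
      Compress (Fs ∩ ⋂ i ∈ S, G i) (⋂ i ∈ S, G i) k)
    (hf : Continuous f) (hU : ∀ i ∈ T, ∀ x ∈ U i, f x ∈ G i)
    (hcov : ∀ z : Fin n → ℤ, ∃ i ∈ T, ibox z (fun j => z j + 1) ⊆ U i)
    (a b : Fin n → ℤ) (hab : ∀ i, a i ≤ b i) : ∀ φ, GridHtpy Fs G T f U (iboxBd a b) φ →
    ∃ ψ, GridHtpy Fs G T f U (ibox a b) ψ ∧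
      ∀ x ∈ iboxBd a b, ∀ t ∈ Set.Icc (0 : ℝ) 1, ψ (x, t) = φ (x, t) := by
  refine box_induction (fun a b => ∀ φ, GridHtpy Fs G T f U (iboxBd a b) φ →
    ∃ ψ, GridHtpy Fs G T f U (ibox a b) ψ ∧
      ∀ x ∈ iboxBd a b, ∀ t ∈ Set.Icc (0 : ℝ) 1, ψ (x, t) = φ (x, t)) ?_ ?_ a b hab
  · intro a b hab hba φ hφ
    exact gridHtpy_cell hcomp hf hU hcov a b hab hba hφ
  · intro a b i m hab ham hmb hw hl hr φ hφ
    have hamR : (a i : ℝ) < m := by exact_mod_cast ham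
    have hmbR : (m : ℝ) < b i := by exact_mod_cast hmb
    have hwall : ∀ x, x ∈ ibox (Function.update a i m) (Function.update b i m) ↔
        x ∈ ibox a b ∧ x i = m := fun x => by
      constructor
      · intro h
        have hi := h i
        simp only [Function.update_self] at hi
        have hxi : x i = m := le_antisymm hi.2 hi.1
        refine ⟨fun j => ?_, hxi⟩
        rcases eq_or_ne j i with rfl | hj
        · rw [hxi]; exact ⟨hamR.le, hmbR.le⟩
        · simpa [Function.update_of_ne hj] using h j
      · rintro ⟨h, hxi⟩ j
        rcases eq_or_ne j i with rfl | hj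
        · simp [hxi]
        · simpa [Function.update_of_ne hj] using h j
    have hleft : ∀ x, x ∈ ibox a (Function.update b i m) ↔ x ∈ ibox a b ∧ x i ≤ m := fun x => by
      constructor
      · intro h
        have hi := h i
        simp only [Function.update_self] at hi
        refine ⟨fun j => ?_, hi.2⟩
        rcases eq_or_ne j i with rfl | hj
        · exact ⟨hi.1, hi.2.trans hmbR.le⟩
        · simpa [Function.update_of_ne hj] using h j
      · rintro ⟨h, hxi⟩ j
        rcases eq_or_ne j i with rfl | hj
        · simpa [hxi] using (h j).1
        · simpa [Function.update_of_ne hj] using h j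
    have hright : ∀ x, x ∈ ibox (Function.update a i m) b ↔ x ∈ ibox a b ∧ m ≤ x i := fun x => by
      constructor
      · intro h
        have hi := h i
        simp only [Function.update_self] at hi
        refine ⟨fun j => ?_, hi.1⟩
        rcases eq_or_ne j i with rfl | hj
        · exact ⟨hamR.le.trans hi.1, hi.2⟩
        · simpa [Function.update_of_ne hj] using h j
      · rintro ⟨h, hxi⟩ j
        rcases eq_or_ne j i with rfl | hj
        · simpa [hxi] using (h j).2
        · simpa [Function.update_of_ne hj] using h j
    have hwb : ∀ x, x ∈ iboxBd (Function.update a i m) (Function.update b i m) ↔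
        x ∈ iboxBd a b ∧ x i = m := fun x => by
      constructor
      · rintro ⟨hx, j, hj, hxj⟩
        obtain ⟨h1, h2⟩ := (hwall x).1 hx
        have hji : j ≠ i := by rintro rfl; simp at hj
        simp only [Function.update_of_ne hji] at hj hxj
        exact ⟨⟨h1, j, hj, hxj⟩, h2⟩
      · rintro ⟨⟨hx, j, hj, hxj⟩, h2⟩
        have hji : j ≠ i := by
          rintro rfl
          rcases hxj with h | h <;> linarith
        refine ⟨(hwall x).2 ⟨hx, h2⟩, j, ?_⟩
        simp only [Function.update_of_ne hji]
        exact ⟨hj, hxj⟩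
    have hlb : ∀ x, x ∈ iboxBd a (Function.update b i m) ↔
        (x ∈ iboxBd a b ∧ x i ≤ m) ∨ (x ∈ ibox a b ∧ x i = m) := fun x => by
      constructor
      · rintro ⟨hx, j, hj, hxj⟩
        obtain ⟨h1, h2⟩ := (hleft x).1 hx
        rcases eq_or_ne j i with rfl | hji
        · simp only [Function.update_self] at hj hxj
          rcases hxj with h | h
          · exact Or.inl ⟨⟨h1, j, ham.trans hmb, Or.inl h⟩, h2⟩
          · exact Or.inr ⟨h1, h⟩
        · simp only [Function.update_of_ne hji] at hj hxj
          exact Or.inl ⟨⟨h1, j, hj, hxj⟩, h2⟩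
      · rintro (⟨⟨hx, j, hj, hxj⟩, h2⟩ | ⟨hx, h2⟩)
        · refine ⟨(hleft x).2 ⟨hx, h2⟩, j, ?_⟩
          rcases eq_or_ne j i with rfl | hji
          · rw [Function.update_self]
            refine ⟨ham, Or.inl (hxj.resolve_right fun h => ?_)⟩
            linarith
          · rw [Function.update_of_ne hji]
            exact ⟨hj, hxj⟩
        · refine ⟨(hleft x).2 ⟨hx, h2.le⟩, i, ?_⟩
          rw [Function.update_self]
          exact ⟨ham, Or.inr h2⟩
    have hrb : ∀ x, x ∈ iboxBd (Function.update a i m) b ↔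
        (x ∈ iboxBd a b ∧ m ≤ x i) ∨ (x ∈ ibox a b ∧ x i = m) := fun x => by
      constructor
      · rintro ⟨hx, j, hj, hxj⟩
        obtain ⟨h1, h2⟩ := (hright x).1 hx
        rcases eq_or_ne j i with rfl | hji
        · simp only [Function.update_self] at hj hxj
          rcases hxj with h | h
          · exact Or.inr ⟨h1, h⟩
          · exact Or.inl ⟨⟨h1, j, ham.trans hmb, Or.inr h⟩, h2⟩
        · simp only [Function.update_of_ne hji] at hj hxj
          exact Or.inl ⟨⟨h1, j, hj, hxj⟩, h2⟩
      · rintro (⟨⟨hx, j, hj, hxj⟩, h2⟩ | ⟨hx, h2⟩)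
        · refine ⟨(hright x).2 ⟨hx, h2⟩, j, ?_⟩
          rcases eq_or_ne j i with rfl | hji
          · rw [Function.update_self]
            refine ⟨hmb, Or.inr (hxj.resolve_left fun h => ?_)⟩
            linarith
          · rw [Function.update_of_ne hji]
            exact ⟨hj, hxj⟩
        · refine ⟨(hright x).2 ⟨hx, h2.ge⟩, i, ?_⟩
          rw [Function.update_self]
          exact ⟨hmb, Or.inl h2⟩
    -- First the dividing wall, then the two halves.
    obtain ⟨ψw, hψw, hw'⟩ := hw φ (hφ.mono fun x hx => ((hwb x).1 hx).1)
    obtain ⟨χ, hχ, hχ1, hχ2⟩ := hφ.glue hψw (isClosed_iboxBd a b) (isClosed_ibox _ _)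
      (fun x h1 h2 t ht => (hw' x ((hwb x).2 ⟨h1, ((hwall x).1 h2).2⟩) t ht).symm)
    obtain ⟨ψl, hψl, hl'⟩ := hl χ (hχ.mono fun x hx => by
      rcases (hlb x).1 hx with h | h
      · exact Or.inl h.1
      · exact Or.inr ((hwall x).2 h))
    obtain ⟨ψr, hψr, hr'⟩ := hr χ (hχ.mono fun x hx => by
      rcases (hrb x).1 hx with h | h
      · exact Or.inl h.1
      · exact Or.inr ((hwall x).2 h))
    obtain ⟨ψ, hψ, hψ1, hψ2⟩ := hψl.glue hψr (isClosed_ibox _ _) (isClosed_ibox _ _)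
      (fun x h1 h2 t ht => by
        obtain ⟨h3, h4⟩ := (hleft x).1 h1
        have h5 : x i = m := le_antisymm h4 ((hright x).1 h2).2
        rw [hl' x ((hlb x).2 (Or.inr ⟨h3, h5⟩)) t ht, hr' x ((hrb x).2 (Or.inr ⟨h3, h5⟩)) t ht])
    refine ⟨ψ, hψ.mono fun x hx => ?_, fun x hx t ht => ?_⟩
    · rcases le_total (x i) m with h | h
      · exact Or.inl ((hleft x).2 ⟨hx, h⟩)
      · exact Or.inr ((hright x).2 ⟨hx, h⟩)
    · rw [← hχ1 x hx t ht]
      rcases le_total (x i) m with h | h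
      · rw [hψ1 x ((hleft x).2 ⟨hx.1, h⟩) t ht, hl' x ((hlb x).2 (Or.inl ⟨hx, h⟩)) t ht]
      · rw [hψ2 x ((hright x).2 ⟨hx.1, h⟩) t ht, hr' x ((hrb x).2 (Or.inl ⟨hx, h⟩)) t ht]

end Grid

/-! ### Deformation of maps on a cube by subdivision -/

/-- The coordinatewise retraction of `ℝ^n` onto `[-1,1]^n`. -/
noncomputable def cubeClamp {n : ℕ} (x : Fin n → ℝ) : Fin n → ℝ := fun i => max (-1) (min 1 (x i))

theorem continuous_cubeClamp {n : ℕ} : Continuous (cubeClamp (n := n)) :=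
  continuous_pi fun i => by unfold cubeClamp; fun_prop

theorem norm_cubeClamp_le {n : ℕ} (x : Fin n → ℝ) : ‖cubeClamp x‖ ≤ 1 :=
  (pi_norm_le_iff_of_nonneg zero_le_one).2 fun i => abs_le.2
    ⟨le_max_left _ _, max_le (by norm_num) (min_le_left _ _)⟩

theorem cubeClamp_of_le {n : ℕ} {x : Fin n → ℝ} (hx : ‖x‖ ≤ 1) : cubeClamp x = x := by
  funext i
  have h := abs_le.1 ((norm_le_pi_norm x i).trans hx)
  simp only [cubeClamp]
  rw [min_eq_right h.2, max_eq_right h.1]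

theorem dist_cubeClamp_le {n : ℕ} (x y : Fin n → ℝ) : dist (cubeClamp x) (cubeClamp y) ≤ dist x y := by
  refine (dist_pi_le_iff dist_nonneg).2 fun i => le_trans ?_ (dist_le_pi_dist x y i)
  simp only [cubeClamp, Real.dist_eq]
  have h1 := abs_max_sub_max_le_abs (min 1 (x i)) (min 1 (y i)) (-1)
  have h2 := abs_min_sub_min_le_max 1 (x i) 1 (y i)
  rw [max_comm (-1), max_comm (-1)]
  refine h1.trans (h2.trans ?_)
  simp

/-- A map on the cube that is covered by finitely many of the constraints `G i`, and lies in `Fs`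
on the boundary, can be deformed rel boundary into `Fs`, such that the result is still covered
by the constraints. -/
theorem grid_deform {Z : Type*} [TopologicalSpace Z] {Fs : Set Z} {G : ℕ → Set Z}
    (hcomp : ∀ S : Finset ℕ, S.Nonempty → ∀ k,
      Compress (Fs ∩ ⋂ i ∈ S, G i) (⋂ i ∈ S, G i) k)
    {n : ℕ} (T : Finset ℕ) (h : C(Fin n → ℝ, Z)) (U : ℕ → Set (Fin n → ℝ))
    (hUo : ∀ i ∈ T, IsOpen (U i)) (hU : ∀ i ∈ T, ∀ x ∈ U i, ‖x‖ ≤ 1 → h x ∈ G i)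
    (hcov : ∀ x, ‖x‖ ≤ 1 → ∃ i ∈ T, x ∈ U i) (hbd : ∀ x, ‖x‖ = 1 → h x ∈ Fs) :
    ∃ (H : C((Fin n → ℝ) × ℝ, Z)) (V : ℕ → Set (Fin n → ℝ)),
      (∀ x, ‖x‖ ≤ 1 → H (x, 0) = h x) ∧
      (∀ x t, ‖x‖ = 1 → t ∈ Set.Icc (0 : ℝ) 1 → H (x, t) = h x) ∧
      (∀ x, H (x, 1) ∈ Fs) ∧ (∀ i, IsOpen (V i)) ∧
      (∀ i ∈ T, ∀ x ∈ V i, H (x, 1) ∈ G i) ∧ ∀ x, ∃ i ∈ T, x ∈ V i := by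
  obtain ⟨δ, hδ, hL⟩ := lebesgue_number_lemma_of_metric (c := fun i : T => U i)
    (isCompact_closedBall (0 : Fin n → ℝ) 1) (fun i => hUo i i.2) (fun x hx => by
      obtain ⟨i, hi, hx⟩ := hcov x (by simpa using hx)
      exact Set.mem_iUnion.2 ⟨⟨i, hi⟩, hx⟩)
  obtain ⟨N, hN⟩ := exists_nat_gt (max 1 (2 / δ))
  have hN1 : (1 : ℝ) < N := (le_max_left _ _).trans_lt hN
  have hN0 : (0 : ℝ) < N := by linarith
  have hNδ : 2 / (N : ℝ) < δ := by
    rw [div_lt_comm₀ hN0 hδ]; exact (le_max_right _ _).trans_lt hN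
  -- The cube `[-1,1]^n` is scaled to `[-N,N]^n`.
  let r : (Fin n → ℝ) → (Fin n → ℝ) := fun y => cubeClamp ((N : ℝ)⁻¹ • y)
  have hr : Continuous r := continuous_cubeClamp.comp (by fun_prop)
  have hrn : ∀ y, ‖r y‖ ≤ 1 := fun y => norm_cubeClamp_le _
  have hrd : ∀ y y', dist y y' ≤ 2 → dist (r y) (r y') < δ := fun y y' hd => by
    refine lt_of_le_of_lt ((dist_cubeClamp_le _ _).trans ?_) hNδ
    rw [dist_smul₀, norm_inv, Real.norm_of_nonneg hN0.le, inv_mul_eq_div]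
    gcongr
  have hball : ∀ y, ∃ i ∈ T, ∀ y', dist y' y ≤ 2 → r y' ∈ U i := fun y => by
    obtain ⟨i, hi⟩ := hL (r y) (by simpa using hrn y)
    exact ⟨i, i.2, fun y' hy' => hi (hrd _ _ hy')⟩
  have hcell : ∀ (z : Fin n → ℤ) y y', y ∈ ibox z (fun j => z j + 1) →
      y' ∈ ibox z (fun j => z j + 1) → dist y y' ≤ 1 := fun z y y' hy hy' => by
    refine (dist_pi_le_iff zero_le_one).2 fun j => ?_
    have h1 := hy j
    have h2 := hy' j
    push_cast at h1 h2
    rw [Real.dist_eq]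
    exact abs_le.2 ⟨by linarith, by linarith⟩
  let f : (Fin n → ℝ) → Z := fun y => h (r y)
  let U' : ℕ → Set (Fin n → ℝ) := fun i => r ⁻¹' U i
  have hU' : ∀ i ∈ T, ∀ x ∈ U' i, f x ∈ G i := fun i hi x hx => hU i hi _ hx (hrn x)
  have hcov' : ∀ z : Fin n → ℤ, ∃ i ∈ T, ibox z (fun j => z j + 1) ⊆ U' i := fun z => by
    have hz : (fun j => (z j : ℝ)) ∈ ibox z (fun j => z j + 1) := fun j => by simp
    obtain ⟨i, hi, h⟩ := hball (fun j => (z j : ℝ))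
    exact ⟨i, hi, fun y hy => h y ((hcell z _ _ hy hz).trans one_le_two)⟩
  have hbox : ∀ y : Fin n → ℝ, y ∈ ibox (fun _ : Fin n => -(N : ℤ)) (fun _ => (N : ℤ)) ↔
      ‖(N : ℝ)⁻¹ • y‖ ≤ 1 := fun y => by
    rw [norm_smul, norm_inv, Real.norm_of_nonneg hN0.le, inv_mul_le_iff₀ hN0, mul_one,
      pi_norm_le_iff_of_nonneg hN0.le]
    refine forall_congr' fun i => ?_
    rw [Real.norm_eq_abs, abs_le]
    push_cast
    rfl
  have hbdry : ∀ y : Fin n → ℝ, y ∈ iboxBd (fun _ : Fin n => -(N : ℤ)) (fun _ => (N : ℤ)) ↔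
      ‖(N : ℝ)⁻¹ • y‖ = 1 := fun y => by
    constructor
    · rintro ⟨h1, i, -, h2⟩
      have h3 := (hbox y).1 h1
      rw [pi_norm_eq_one_iff fun j => (norm_le_pi_norm _ j).trans h3]
      refine ⟨i, (abs_eq zero_le_one).2 ?_⟩
      simp only [Pi.smul_apply, smul_eq_mul]
      push_cast at h2
      rcases h2 with h2 | h2 <;> rw [h2]
      · right; field_simp
      · left; field_simp
    · intro h1
      refine ⟨(hbox y).2 h1.le, ?_⟩
      obtain ⟨i, hi⟩ := (pi_norm_eq_one_iff fun j => (norm_le_pi_norm _ j).trans h1.le).1 h1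
      refine ⟨i, by have : (0 : ℤ) < N := by exact_mod_cast hN0
                    simp only; omega, ?_⟩
      simp only [Pi.smul_apply, smul_eq_mul] at hi
      push_cast
      rcases (abs_eq zero_le_one).1 hi with h2 | h2
      · right
        field_simp at h2; linarith
      · left
        field_simp at h2; linarith
  obtain ⟨ψ, hψ, hψb⟩ := gridHtpy_box (Fs := Fs) (G := G) (T := T) (f := f) (U := U') hcomp
    (h.continuous.comp hr) hU' hcov' (fun _ => -(N : ℤ)) (fun _ => (N : ℤ)) (fun i => by
      have : (0 : ℤ) < N := by exact_mod_cast hN0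
      omega) (fun q => f q.1)
    ⟨((h.continuous.comp hr).comp continuous_fst).continuousOn, fun _ _ => rfl,
      fun x _ t _ i hi hx => by
        obtain ⟨z, hz, hzU⟩ := hx
        exact hU' i hi x (hzU hz),
      fun x hx => by
        refine hbd _ ?_
        have h1 := (hbdry x).1 hx
        simp only [r]
        rw [cubeClamp_of_le h1.le, h1]⟩
  let s : (Fin n → ℝ) → (Fin n → ℝ) := fun x => (N : ℝ) • cubeClamp x
  have hs : Continuous s := continuous_cubeClamp.fun_const_smul _
  have hsr : ∀ x, (N : ℝ)⁻¹ • s x = cubeClamp x := fun x => inv_smul_smul₀ hN0.ne' _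
  have hsbox : ∀ x, s x ∈ ibox (fun _ : Fin n => -(N : ℤ)) (fun _ => (N : ℤ)) := fun x => by
    rw [hbox, hsr]; exact norm_cubeClamp_le x
  have hfs : ∀ x, ‖x‖ ≤ 1 → f (s x) = h x := fun x hx => by
    simp only [f, r, hsr, cubeClamp_of_le hx]
  refine ⟨⟨fun q => ψ (s q.1, max 0 (min 1 q.2)), ?_⟩, fun i => s ⁻¹' interior (cellUnion (U' i)),
    ?_, ?_, ?_, ?_, ?_, ?_⟩
  · exact hψ.cont.comp_continuous (by fun_prop) fun q => ⟨hsbox _, le_max_left _ _,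
      max_le zero_le_one (min_le_left _ _)⟩
  · intro x hx
    simp only [ContinuousMap.coe_mk]
    rw [← hfs x hx, ← hψ.zero _ (hsbox x)]
    simp
  · intro x t hx ht
    simp only [ContinuousMap.coe_mk]
    rw [min_eq_right ht.2, max_eq_right ht.1, hψb _ _ _ ht]
    · exact hfs x hx.le
    · rw [hbdry, hsr, cubeClamp_of_le hx.le, hx]
  · intro x
    simpa using hψ.one _ (hsbox x)
  · intro i
    exact isOpen_interior.preimage hs
  · intro i hi x hx
    simpa using hψ.mem _ (hsbox x) 1 (by simp) i hi (interior_subset hx)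
  · intro x
    obtain ⟨i, hi, h⟩ := hball (s x)
    refine ⟨i, hi, mem_interior.2 ⟨Metric.ball (s x) 1, fun y hy => ?_, Metric.isOpen_ball,
      Metric.mem_ball_self one_pos⟩⟩
    have hy' : y ∈ ibox (fun j => ⌊y j⌋) (fun j => ⌊y j⌋ + 1) := fun j => by
      push_cast
      exact ⟨Int.floor_le _, (Int.lt_floor_add_one _).le⟩
    refine ⟨fun j => ⌊y j⌋, hy', fun y' hy'' => h y' ?_⟩
    have h1 := hcell _ _ _ hy'' hy'
    have h2 := dist_triangle y' y (s x)
    have h3 : dist y (s x) < 1 := hy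
    linarith

/-! ### A lifting criterion for weak equivalences -/

/-- A relative lifting property, in dimension `n`, up to homotopy rel boundary: a map of
`[-1,1]^n` to `Z` that is lifted to `X` on the boundary is homotopic rel boundary to a map that
lifts to `X`, by an extension of the given lift. -/
def HLift {X Z : Type*} [TopologicalSpace X] [TopologicalSpace Z] (w : C(X, Z)) (n : ℕ) : Prop :=
  ∀ (b : C(Fin n → ℝ, Z)) (a : C({x : Fin n → ℝ // ‖x‖ = 1}, X)), (∀ x, w (a x) = b x) →
    ∃ (c : C(Fin n → ℝ, X)) (H : C((Fin n → ℝ) × ℝ, Z)), (∀ x : {x : Fin n → ℝ // ‖x‖ = 1}, c x = a x) ∧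
      (∀ x, ‖x‖ ≤ 1 → H (x, 0) = b x) ∧
      (∀ x t, ‖x‖ = 1 → t ∈ Set.Icc (0 : ℝ) 1 → H (x, t) = b x) ∧
      (∀ x, ‖x‖ ≤ 1 → H (x, 1) = w (c x))

section

variable {X Z : Type*} [TopologicalSpace X] [TopologicalSpace Z] {w : C(X, Z)}

theorem HLift.pi0_surj (h : HLift w 0) : Function.Surjective (pi0Map w) := by
  intro Q
  obtain ⟨z, rfl⟩ := Quotient.exists_rep Q
  have hn : ∀ x : Fin 0 → ℝ, ‖x‖ = 0 := fun x => by rw [Subsingleton.elim x 0, norm_zero]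
  have hE : IsEmpty {x : Fin 0 → ℝ // ‖x‖ = 1} := ⟨fun x => by
    have := hn x.1
    rw [x.2] at this
    norm_num at this⟩
  obtain ⟨c, H, -, H0, -, H1⟩ := h (ContinuousMap.const _ z)
    ⟨fun x => hE.elim x, continuous_of_const fun x => hE.elim x⟩ (fun x => hE.elim x)
  refine ⟨Quotient.mk _ (c 0), ?_⟩
  refine Quotient.sound (Joined.symm ⟨⟨⟨fun t => H (0, t), by fun_prop⟩, ?_, ?_⟩⟩)
  · simpa using H0 0 (by rw [norm_zero]; exact zero_le_one)
  · simpa using H1 0 (by rw [norm_zero]; exact zero_le_one)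

theorem HLift.pi0_inj (h : HLift w 1) : Function.Injective (pi0Map w) := by
  intro P Q hPQ
  obtain ⟨x, rfl⟩ := Quotient.exists_rep P
  obtain ⟨y, rfl⟩ := Quotient.exists_rep Q
  obtain ⟨γ⟩ : Joined (w x) (w y) := Quotient.exact hPQ
  have hn : ∀ u : Fin 1 → ℝ, ‖u‖ = |u 0| := fun u => by
    rw [norm_succ, Subsingleton.elim (Fin.tail u) 0, norm_zero, max_eq_left (abs_nonneg _)]
  obtain ⟨c, -, hc, -⟩ := h ⟨fun u => γ.extend ((u 0 + 1) / 2), by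
      have := γ.continuous_extend; fun_prop⟩
    ⟨fun u => if u.1 0 ≤ 0 then x else y, by
      refine Continuous.if_le continuous_const continuous_const
        ((continuous_apply 0).comp continuous_subtype_val) continuous_const ?_
      intro u hu
      have := u.2
      rw [hn, hu] at this
      norm_num at this⟩ (fun u => by
      have hu := u.2
      rw [hn, abs_eq zero_le_one] at hu
      simp only [ContinuousMap.coe_mk]
      rcases hu with hu | hu
      · rw [hu, if_neg (by norm_num)]; norm_num
      · rw [hu, if_pos (by norm_num)]; norm_num)
  refine Quotient.sound ⟨⟨⟨fun t => c (fun _ => 2 * (t : ℝ) - 1), by fun_prop⟩, ?_, ?_⟩⟩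
  · have := hc ⟨fun _ => -1, by rw [hn]; norm_num⟩
    norm_num at this ⊢
    exact this
  · have := hc ⟨fun _ => 1, by rw [hn]; norm_num⟩
    norm_num at this ⊢
    exact this

theorem HLift.pi_surj {n : ℕ} (h : HLift w n) (x : X) : Function.Surjective (piMap n w x) := by
  intro Q
  obtain ⟨q, rfl⟩ := Quotient.exists_rep Q
  obtain ⟨c, H, hc, H0, Hb, H1⟩ := h ⟨fun u => q.1 (toCube u),
      q.1.continuous.comp continuous_toCube⟩ (ContinuousMap.const _ x) (fun u => by
    exact (q.2 _ (toCube_mem_boundary u.2)).symm)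
  let p : GenLoop (Fin n) X x := ⟨⟨fun y => c (ofCube y), c.continuous.comp continuous_ofCube⟩,
    fun y hy => hc ⟨_, (mem_boundary_iff y).1 hy⟩⟩
  refine ⟨Quotient.mk _ p, Quotient.sound ?_⟩
  have hq : ∀ y, q.1 (toCube (ofCube y)) = q.1 y := fun y => by rw [toCube_ofCube]
  have : GenLoop.Homotopic q (genLoopMap w p) := by
    refine ⟨⟨⟨⟨fun z => H (ofCube z.2, (z.1 : ℝ)), ?_⟩, ?_, ?_⟩, ?_⟩⟩
    · have := continuous_ofCube (n := n)
      fun_prop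
    · intro y
      exact (H0 _ (norm_ofCube_le y)).trans (hq y)
    · intro y
      exact H1 _ (norm_ofCube_le y)
    · intro t y hy
      have := Hb _ _ ((mem_boundary_iff y).1 hy) t.2
      simp only [ContinuousMap.coe_mk] at this ⊢
      rw [this]
      exact hq y
  exact this.symm

theorem HLift.pi_inj {n : ℕ} (h : HLift w (n + 1)) (x : X) :
    Function.Injective (piMap n w x) := by
  classical
  intro P Q hPQ
  obtain ⟨p, rfl⟩ := Quotient.exists_rep P
  obtain ⟨q, rfl⟩ := Quotient.exists_rep Q
  obtain ⟨K⟩ : GenLoop.Homotopic (genLoopMap w p) (genLoopMap w q) := Quotient.exact hPQ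
  have htail : Continuous fun u : Fin (n + 1) → ℝ => Fin.tail u := continuous_pi fun i => by
    unfold Fin.tail; fun_prop
  have htc : Continuous fun u : Fin (n + 1) → ℝ => toCube (Fin.tail u) :=
    continuous_toCube.comp htail
  -- The boundary of `[-1,1]^(n+1)` is mapped by `p` on the bottom, by `q` on the top, and
  -- constantly on the sides.
  let a : (Fin (n + 1) → ℝ) → X := fun u =>
    if u 0 = -1 then p.1 (toCube (Fin.tail u)) else if u 0 = 1 then q.1 (toCube (Fin.tail u)) else x
  have ha1 : ∀ u, u 0 = -1 → a u = p.1 (toCube (Fin.tail u)) := fun u hu => if_pos hu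
  have ha2 : ∀ u, u 0 = 1 → a u = q.1 (toCube (Fin.tail u)) := fun u hu => by
    simp only [a]; rw [if_neg (by rw [hu]; norm_num), if_pos hu]
  have ha3 : ∀ u, ‖Fin.tail u‖ = 1 → a u = x := fun u hu => by
    have hu' := toCube_mem_boundary hu
    simp only [a]
    split_ifs
    · exact p.2 _ hu'
    · exact q.2 _ hu'
    · rfl
  have hsp : ∀ u : Fin (n + 1) → ℝ, ‖u‖ = 1 → u 0 = -1 ∨ u 0 = 1 ∨ ‖Fin.tail u‖ = 1 := fun u hu => by
    rw [norm_succ] at hu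
    rcases max_choice |u 0| ‖Fin.tail u‖ with h | h
    · rw [h, abs_eq zero_le_one] at hu
      tauto
    · rw [h] at hu; tauto
  have hac : ContinuousOn a {u | ‖u‖ = 1} := by
    have : ContinuousOn a ({u | u 0 = -1} ∪ ({u | u 0 = 1} ∪ {u | ‖Fin.tail u‖ = 1})) := by
      have c1 : IsClosed {u : Fin (n + 1) → ℝ | u 0 = -1} :=
        isClosed_eq (continuous_apply 0) continuous_const
      have c2 : IsClosed {u : Fin (n + 1) → ℝ | u 0 = 1} :=
        isClosed_eq (continuous_apply 0) continuous_const
      have c3 : IsClosed {u : Fin (n + 1) → ℝ | ‖Fin.tail u‖ = 1} :=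
        isClosed_eq htail.norm continuous_const
      refine ContinuousOn.union_of_isClosed ?_ (ContinuousOn.union_of_isClosed ?_ ?_ c2 c3) c1
        (c2.union c3)
      · exact (p.1.continuous.comp htc).continuousOn.congr ha1
      · exact (q.1.continuous.comp htc).continuousOn.congr ha2
      · exact continuousOn_const.congr ha3
    exact this.mono fun u hu => hsp u hu
  obtain ⟨c, -, hc, -⟩ := h ⟨fun u => K (Set.projIcc 0 1 zero_le_one ((u 0 + 1) / 2),
      toCube (Fin.tail u)), by
      refine K.continuous.comp (Continuous.prodMk (continuous_projIcc.comp (by fun_prop)) htc)⟩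
    ⟨fun u => a u, hac.comp_continuous continuous_subtype_val fun u => u.2⟩ (fun u => by
      simp only [ContinuousMap.coe_mk]
      rcases hsp u.1 u.2 with hu | hu | hu
      · rw [ha1 _ hu, hu, neg_add_cancel, zero_div, Set.projIcc_left]
        erw [K.apply_zero]
        rfl
      · rw [ha2 _ hu, hu, show ((1 : ℝ) + 1) / 2 = 1 by norm_num, Set.projIcc_right]
        erw [K.apply_one]
        rfl
      · rw [ha3 _ hu]
        have := K.eq_fst (Set.projIcc 0 1 zero_le_one ((u.1 0 + 1) / 2)) (toCube_mem_boundary hu)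
        refine Eq.trans ?_ this.symm
        exact congrArg w (p.2 _ (toCube_mem_boundary hu)).symm)
  let g : I × (Fin n → I) → (Fin (n + 1) → ℝ) := fun z => Fin.cons (2 * (z.1 : ℝ) - 1) (ofCube z.2)
  have hg : Continuous g := by
    refine continuous_pi fun i => Fin.cases ?_ (fun j => ?_) i
    · simp only [g, Fin.cons_zero]; fun_prop
    · simp only [g, Fin.cons_succ, ofCube]; fun_prop
  have hgt : ∀ z, Fin.tail (g z) = ofCube z.2 := fun z => Fin.tail_cons _ _
  have hg1 : ∀ z, |g z 0| ≤ 1 := fun z => by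
    have := z.1.2
    exact abs_le.2 ⟨by simp only [g, Fin.cons_zero]; linarith [this.1],
      by simp only [g, Fin.cons_zero]; linarith [this.2]⟩
  have hgn : ∀ z, (|g z 0| = 1 ∨ ‖ofCube z.2‖ = 1) → ‖g z‖ = 1 := fun z hz => by
    rw [norm_succ, hgt]
    rcases hz with hz | hz
    · rw [hz]; exact max_eq_left (norm_ofCube_le _)
    · rw [hz]; exact max_eq_right (hg1 z)
  have hg00 : ∀ y, g (0, y) 0 = -1 := fun y => by simp [g]
  have hg10 : ∀ y, g (1, y) 0 = 1 := fun y => by simp [g]; norm_num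
  refine Quotient.sound ⟨⟨⟨⟨fun z => c (g z), c.continuous.comp hg⟩, ?_, ?_⟩, ?_⟩⟩
  · intro y
    refine (hc ⟨g (0, y), hgn _ (Or.inl (by rw [hg00]; norm_num))⟩).trans ?_
    refine (ha1 _ (hg00 y)).trans ?_
    rw [hgt, toCube_ofCube]
  · intro y
    refine (hc ⟨g (1, y), hgn _ (Or.inl (by rw [hg10]; norm_num))⟩).trans ?_
    refine (ha2 _ (hg10 y)).trans ?_
    rw [hgt, toCube_ofCube]
  · intro t y hy
    have hy' : ‖ofCube y‖ = 1 := (mem_boundary_iff y).1 hy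
    refine (hc ⟨g (t, y), hgn _ (Or.inr hy')⟩).trans ?_
    refine (ha3 _ (by rw [hgt]; exact hy')).trans ?_
    exact (p.2 y hy).symm

/-- Lifting in dimension `n` gives surjectivity on `π_n`, and lifting in dimension `n + 1` gives
injectivity on `π_n`. -/
theorem isWeakHomotopyEquiv_of_hLift (h : ∀ n, HLift w n) : IsWeakHomotopyEquiv w :=
  ⟨w.continuous, ⟨(h 1).pi0_inj, (h 0).pi0_surj⟩, fun n _ x => ⟨(h (n + 1)).pi_inj x,
    (h n).pi_surj x⟩⟩

end

/-! ### The resolution -/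

section

variable {Z : Type*} [TopologicalSpace Z]

/-- Homotopy of maps `[-1,1]^n → Z` relative to the boundary. -/
def BdHtpy {n : ℕ} (b b' : C(Fin n → ℝ, Z)) : Prop :=
  ∃ H : C((Fin n → ℝ) × ℝ, Z), (∀ x, ‖x‖ ≤ 1 → H (x, 0) = b x) ∧
    (∀ x, ‖x‖ ≤ 1 → H (x, 1) = b' x) ∧
    (∀ x t, ‖x‖ = 1 → t ∈ Set.Icc (0 : ℝ) 1 → H (x, t) = b x)

theorem BdHtpy.trans {n : ℕ} {b b' b'' : C(Fin n → ℝ, Z)} (h : BdHtpy b b')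
    (h' : BdHtpy b' b'') : BdHtpy b b'' := by
  obtain ⟨H, H0, H1, Hb⟩ := h
  obtain ⟨K, K0, K1, Kb⟩ := h'
  refine ⟨⟨fun p => if 2 * p.2 ≤ 1 then H (ballRetr p.1, 2 * p.2)
    else K (ballRetr p.1, 2 * p.2 - 1), ?_⟩, ?_, ?_, ?_⟩
  · have := continuous_ballRetr (n := n)
    refine Continuous.if_le (by fun_prop) (by fun_prop) (by fun_prop) (by fun_prop) ?_
    intro p hp
    rw [hp, H1 _ (norm_ballRetr_le _), sub_self, K0 _ (norm_ballRetr_le _)]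
  · intro x hx
    simp [ballRetr_of_le hx, H0 x hx]
  · intro x hx
    simp only [ContinuousMap.coe_mk]
    rw [if_neg (by norm_num), ballRetr_of_le hx]
    norm_num [K1 x hx]
  · intro x t hx ht
    simp only [ContinuousMap.coe_mk]
    rw [ballRetr_of_le hx.le]
    split_ifs with h
    · exact Hb _ _ hx ⟨by linarith [ht.1], h⟩
    · rw [Kb _ _ hx ⟨by linarith, by linarith [ht.2]⟩, ← H1 x hx.le, Hb x 1 hx (by simp)]

theorem ballRetr_smul {n : ℕ} {x : Fin n → ℝ} {t : ℝ} (ht : 0 < t) (h : 1 ≤ t * ‖x‖) :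
    ballRetr (t • x) = ‖x‖⁻¹ • x := by
  have hx : ‖x‖ ≠ 0 := fun h0 => by rw [h0, mul_zero] at h; norm_num at h
  rw [ballRetr, norm_smul, Real.norm_of_nonneg ht.le, max_eq_right h, smul_smul]
  congr 1
  field_simp

theorem norm_inv_norm_smul {n : ℕ} {x : Fin n → ℝ} (hx : 1 / 2 < ‖x‖) : ‖‖x‖⁻¹ • x‖ = 1 := by
  rw [norm_smul, norm_inv, norm_norm, inv_mul_cancel₀ (by linarith)]

variable (Fs : Set Z) (G : ℕ → Set Z)

/-- The resolution of `Fs` by the subspaces `Fs ∩ G i`: a point of `Fs` together with a nonempty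
set of indices `i` whose constraint `G i` it satisfies.  Sets of indices carry the product of
Sierpiński topologies, so that a map into this space is a map into `Fs` together with an open
cover of the source, indexed by `ℕ`, on whose `i`-th member the values are in `G i`. -/
abbrev Resolution : Type _ :=
  {p : Fs × (ℕ → Prop) // (∃ i, p.2 i) ∧ ∀ i, p.2 i → (p.1 : Z) ∈ G i}

/-- The projection of the resolution of `Fs` to the ambient space. -/
def resolutionMap : C(Resolution Fs G, Z) :=
  ⟨fun p => (p.1.1 : Z), continuous_subtype_val.comp
    (continuous_fst.comp continuous_subtype_val)⟩

variable {Fs G}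

/-- The projection of the resolution has the lifting property if the inclusions
`Fs ∩ ⋂ i ∈ S, G i ⊆ ⋂ i ∈ S, G i` are compressible and if every family can be moved into some
`G m` while keeping the finitely many constraints in `S`.  The lift on the sphere involves only
finitely many constraints; the family is deformed into some `G m` preserving these, so that
finitely many constraints cover the whole cube, and `grid_deform` moves it into `Fs`. -/
theorem hLift_resolutionMap
    (hcomp : ∀ S : Finset ℕ, S.Nonempty → ∀ k,
      Compress (Fs ∩ ⋂ i ∈ S, G i) (⋂ i ∈ S, G i) k)
    (hdef : ∀ (n : ℕ) (b : C(Fin n → ℝ, Z)) (S : Finset ℕ),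
      ∃ (m : ℕ) (H : C((Fin n → ℝ) × ℝ, Z)), (∀ x, H (x, 0) = b x) ∧ (∀ x, H (x, 1) ∈ G m) ∧
        ∀ x, ∀ t ∈ Set.Icc (0 : ℝ) 1, ∀ i ∈ S, b x ∈ G i → H (x, t) ∈ G i)
    (n : ℕ) : HLift (resolutionMap Fs G) n := by
  classical
  intro b a hab
  have hbr := continuous_ballRetr (n := n)
  -- The open cover of the sphere given by `a`, and a finite subcover.
  have hV : ∀ i, ∃ V : Set (Fin n → ℝ), IsOpen V ∧
      ∀ x : {x : Fin n → ℝ // ‖x‖ = 1}, x.1 ∈ V ↔ (a x).1.2 i := fun i => by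
    have h1 : Continuous fun x => (a x).1.2 i :=
      (continuous_apply i).comp (continuous_snd.comp (continuous_subtype_val.comp a.continuous))
    obtain ⟨V, hV, h2⟩ := isOpen_induced_iff.1 (continuous_Prop.1 h1)
    exact ⟨V, hV, fun x => Set.ext_iff.1 h2 x⟩
  choose V hVo hVa using hV
  have hVG : ∀ i x, ‖x‖ = 1 → x ∈ V i → b x ∈ G i := fun i x hx hxV => by
    rw [show b x = _ from (hab ⟨x, hx⟩).symm]
    exact (a ⟨x, hx⟩).2.2 i ((hVa i ⟨x, hx⟩).1 hxV)
  have hVc : ∀ x, ‖x‖ = 1 → ∃ i, x ∈ V i := fun x hx => by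
    obtain ⟨i, hi⟩ := (a ⟨x, hx⟩).2.1
    exact ⟨i, (hVa i ⟨x, hx⟩).2 hi⟩
  have hbF : ∀ x, ‖x‖ = 1 → b x ∈ Fs := fun x hx => by
    rw [show b x = _ from (hab ⟨x, hx⟩).symm]
    exact (a ⟨x, hx⟩).1.1.2
  obtain ⟨S, hS⟩ := (isCompact_sphere (0 : Fin n → ℝ) 1).elim_finite_subcover V hVo (fun x hx => by
    obtain ⟨i, hi⟩ := hVc x (by simpa using hx)
    exact Set.mem_iUnion.2 ⟨i, hi⟩)
  have hSc : ∀ x, ‖x‖ = 1 → ∃ i ∈ S, x ∈ V i := fun x hx => by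
    have := hS (show x ∈ Metric.sphere (0 : Fin n → ℝ) 1 by simpa using hx)
    simpa using this
  -- The radial extension of the cover to a neighbourhood of the sphere.
  let O : ℕ → Set (Fin n → ℝ) := fun i => {x | 1 / 2 < ‖x‖} ∩ {x | ‖x‖⁻¹ • x ∈ V i}
  have hOo : ∀ i, IsOpen (O i) := fun i => by
    refine ContinuousOn.isOpen_inter_preimage ?_ (isOpen_lt continuous_const continuous_norm)
      (hVo i)
    refine ContinuousOn.fun_smul (ContinuousOn.fun_inv₀ continuous_norm.continuousOn ?_)
      continuousOn_id
    intro x hx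
    have : 1 / 2 < ‖x‖ := hx
    linarith
  obtain ⟨m, H, H0, H1, HS⟩ := hdef n b S
  -- Shrink `b` radially, and use the collar to perform the homotopy `H`.
  let h : C(Fin n → ℝ, Z) :=
    ⟨fun x => H (ballRetr ((2 : ℝ) • x), max 0 (min 1 (4 - 4 * ‖x‖))), by fun_prop⟩
  have hh1 : ∀ x, ‖x‖ < 3 / 4 → h x ∈ G m := fun x hx => by
    have : max 0 (min 1 (4 - 4 * ‖x‖)) = 1 := by
      rw [min_eq_left (by linarith), max_eq_right zero_le_one]
    simp only [h, ContinuousMap.coe_mk, this]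
    exact H1 _
  have hh2 : ∀ i ∈ S, ∀ x ∈ O i, h x ∈ G i := fun i hi x hx => by
    obtain ⟨hx1, hx2⟩ := hx
    simp only [Set.mem_ofPred_eq] at hx1 hx2
    simp only [h, ContinuousMap.coe_mk]
    rw [ballRetr_smul two_pos (by linarith)]
    exact HS _ _ ⟨le_max_left _ _, max_le zero_le_one (min_le_left _ _)⟩ i hi
      (hVG i _ (norm_inv_norm_smul hx1) hx2)
  have hh3 : ∀ x, ‖x‖ = 1 → h x = b x := fun x hx => by
    simp only [h, ContinuousMap.coe_mk]
    rw [ballRetr_smul two_pos (by rw [hx]; norm_num), hx]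
    norm_num
    exact H0 x
  obtain ⟨K, V', K0, Kb, KF, hV'o, KG, hV'c⟩ := grid_deform hcomp (insert m S) h
    (fun i => {x | (i = m ∧ ‖x‖ < 3 / 4) ∨ (i ∈ S ∧ x ∈ O i)})
    (fun i _ => by
      refine IsOpen.union (IsOpen.inter ?_ (isOpen_lt continuous_norm continuous_const))
        (IsOpen.inter ?_ (hOo i))
      · exact isOpen_const
      · exact isOpen_const)
    (fun i _ x hx _ => by
      rcases hx with ⟨rfl, hx⟩ | ⟨hi, hx⟩
      · exact hh1 x hx
      · exact hh2 i hi x hx)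
    (fun x _ => by
      rcases lt_or_ge ‖x‖ (3 / 4) with hx | hx
      · exact ⟨m, Finset.mem_insert_self _ _, Or.inl ⟨rfl, hx⟩⟩
      · have hx' : 1 / 2 < ‖x‖ := by linarith
        obtain ⟨i, hi, hxi⟩ := hSc _ (norm_inv_norm_smul hx')
        exact ⟨i, Finset.mem_insert_of_mem hi, Or.inr ⟨hi, hx', hxi⟩⟩)
    (fun x hx => by rw [hh3 x hx]; exact hbF x hx)
  have hKb : ∀ x, ‖x‖ = 1 → K (x, 1) = b x := fun x hx => by
    rw [Kb x 1 hx (by simp), hh3 x hx]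
  -- One more radial collar, on which the original cover of the sphere is used.
  let W : (Fin n → ℝ) → ℕ → Prop := fun x i =>
    (i ∈ insert m S ∧ ‖x‖ < 1 ∧ ballRetr ((2 : ℝ) • x) ∈ V' i) ∨ x ∈ O i
  have hW : Continuous W := by
    refine continuous_pi fun i => continuous_Prop.2 ?_
    refine IsOpen.union (IsOpen.inter isOpen_const (IsOpen.inter
      (isOpen_lt continuous_norm continuous_const) ((hV'o i).preimage (by fun_prop)))) (hOo i)
  let c : C(Fin n → ℝ, Resolution Fs G) := ⟨fun x => ⟨(⟨K (ballRetr ((2 : ℝ) • x), 1), KF _⟩, W x),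
    by
      rcases lt_or_ge ‖x‖ 1 with hx | hx
      · obtain ⟨i, hi, hxi⟩ := hV'c (ballRetr ((2 : ℝ) • x))
        exact ⟨i, Or.inl ⟨hi, hx, hxi⟩⟩
      · have hx' : 1 / 2 < ‖x‖ := by linarith
        obtain ⟨i, hi⟩ := hVc _ (norm_inv_norm_smul hx')
        exact ⟨i, Or.inr ⟨hx', hi⟩⟩,
    by
      rintro i (⟨hi, -, hxi⟩ | ⟨hx1, hx2⟩)
      · exact KG i hi _ hxi
      · simp only [Set.mem_ofPred_eq] at hx1 hx2
        simp only
        rw [ballRetr_smul two_pos (by linarith), hKb _ (norm_inv_norm_smul hx1)]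
        exact hVG i _ (norm_inv_norm_smul hx1) hx2⟩, by
    refine Continuous.subtype_mk (Continuous.prodMk (Continuous.subtype_mk ?_ _) hW) _
    fun_prop⟩
  have st1 : BdHtpy b h := by
    refine ⟨⟨fun p => H (ballRetr ((1 + p.2) • p.1), max 0 (min p.2 (4 - 4 * ‖p.1‖))), by fun_prop⟩,
      ?_, ?_, ?_⟩
    · intro x hx
      have : max 0 (min 0 (4 - 4 * ‖x‖)) = 0 := max_eq_left (min_le_left _ _)
      simp only [ContinuousMap.coe_mk, this, add_zero, one_smul, ballRetr_of_le hx, H0]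
    · intro x hx
      simp only [ContinuousMap.coe_mk, h]
      norm_num
    · intro x t hx ht
      have h1 : max 0 (min t (4 - 4 * ‖x‖)) = 0 := max_eq_left ((min_le_right _ _).trans (by
        rw [hx]; norm_num))
      simp only [ContinuousMap.coe_mk, h1]
      rw [ballRetr_smul (by linarith [ht.1]) (by rw [hx]; linarith [ht.1]), hx, H0]
      norm_num
  have st2 : BdHtpy h (K.comp ⟨fun x => (x, 1), by fun_prop⟩) := ⟨K, K0, fun _ _ => rfl, Kb⟩
  have st3 : BdHtpy (K.comp ⟨fun x => (x, 1), by fun_prop⟩) ((resolutionMap Fs G).comp c) := by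
    refine ⟨⟨fun p => K (ballRetr ((1 + p.2) • p.1), 1), by fun_prop⟩, ?_, ?_, ?_⟩
    · intro x hx
      simp [ballRetr_of_le hx]
    · intro x hx
      show K (ballRetr ((1 + 1 : ℝ) • x), 1) = K (ballRetr ((2 : ℝ) • x), 1)
      norm_num
    · intro x t hx ht
      show K (ballRetr ((1 + t) • x), 1) = K (x, 1)
      rw [ballRetr_smul (by linarith [ht.1]) (by rw [hx]; linarith [ht.1]), hx]
      norm_num
  obtain ⟨L, L0, L1, Lb⟩ := (st1.trans st2).trans st3
  refine ⟨c, L, ?_, L0, Lb, L1⟩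
  rintro ⟨x, hx⟩
  refine Subtype.ext (Prod.ext (Subtype.ext ?_) ?_)
  · show K (ballRetr ((2 : ℝ) • x), 1) = resolutionMap Fs G (a ⟨x, hx⟩)
    rw [hab ⟨x, hx⟩, ballRetr_smul two_pos (by rw [hx]; norm_num), hx, inv_one, one_smul, hKb x hx]
  · funext i
    refine propext (Iff.trans ?_ (hVa i ⟨x, hx⟩))
    show W x i ↔ x ∈ V i
    have h1 : ‖x‖⁻¹ • x = x := by rw [hx, inv_one, one_smul]
    constructor
    · rintro (⟨-, h2, -⟩ | ⟨-, h2⟩)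
      · linarith
      · simpa [h1] using h2
    · intro h2
      exact Or.inr ⟨by simp only [Set.mem_ofPred_eq]; linarith, by simpa [h1] using h2⟩

end

/-! ### Triviality of bundles over disks -/

/-- A trivialization over `P` of the pullback of `π : E → M` along `q : B → M`, as a pair of mutually
inverse maps `P × F ⇄ {(z, e) | π e = q z}` over `P`. -/
def TrivOn {E M : Type*} [TopologicalSpace E] [TopologicalSpace M] (F : Type*) [TopologicalSpace F]
    (π : E → M) {B : Type*} [TopologicalSpace B] (q : B → M) (P : Set B) : Prop :=
  ∃ (T : B × F → E) (S : B × E → F), ContinuousOn T (P ×ˢ Set.univ) ∧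
    (∀ z ∈ P, ∀ f, π (T (z, f)) = q z) ∧ ContinuousOn S {p | p.1 ∈ P ∧ π p.2 = q p.1} ∧
    (∀ z ∈ P, ∀ f, S (z, T (z, f)) = f) ∧ ∀ z ∈ P, ∀ e, π e = q z → T (z, S (z, e)) = e

section

variable {E M F : Type*} [TopologicalSpace E] [TopologicalSpace M] [TopologicalSpace F]
  {π : E → M} {B : Type*} [TopologicalSpace B] {q : B → M}

theorem TrivOn.pullback {B' : Type*} [TopologicalSpace B'] {P : Set B} {P' : Set B'}
    (h : TrivOn F π q P) (g : B' → B) (hg : Continuous g) (hP : ∀ z ∈ P', g z ∈ P) :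
    TrivOn F π (fun z => q (g z)) P' := by
  obtain ⟨T, S, hT, hπT, hS, hST, hTS⟩ := h
  refine ⟨fun p => T (g p.1, p.2), fun p => S (g p.1, p.2), ?_, fun z hz => hπT _ (hP z hz), ?_,
    fun z hz => hST _ (hP z hz), fun z hz => hTS _ (hP z hz)⟩
  · exact hT.comp (by fun_prop) fun p hp => ⟨hP _ hp.1, trivial⟩
  · exact hS.comp (by fun_prop) fun p hp => ⟨hP _ hp.1, hp.2⟩

theorem TrivOn.mono {P P' : Set B} (h : TrivOn F π q P) (hP : P' ⊆ P) : TrivOn F π q P' :=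
  h.pullback id continuous_id hP

/-- Trivializations over two closed sets can be glued if one of the two sets retracts to their
intersection: extend the transition function along the retraction. -/
theorem TrivOn.glue {L R : Set B} (hL : TrivOn F π q L) (hR : TrivOn F π q R) (hLc : IsClosed L)
    (hRc : IsClosed R) (hπ : Continuous π) (hq : Continuous q) [T2Space M]
    (r : B → B) (hr : Continuous r) (hrL : ∀ z ∈ R, r z ∈ L) (hrR : ∀ z ∈ R, r z ∈ R)
    (hrid : ∀ z ∈ L, z ∈ R → r z = z) : TrivOn F π q (L ∪ R) := by
  classical
  obtain ⟨TL, SL, hTL, hπTL, hSL, hSTL, hTSL⟩ := hL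
  obtain ⟨TR, SR, hTR, hπTR, hSR, hSTR, hTSR⟩ := hR
  let T' : B × F → E := fun p => TR (p.1, SR (r p.1, TL (r p.1, p.2)))
  let S' : B × E → F := fun p => SL (r p.1, TR (r p.1, SR (p.1, p.2)))
  have hT' : ContinuousOn T' (R ×ˢ Set.univ) := by
    refine hTR.comp (ContinuousOn.prodMk continuousOn_fst (hSR.comp
      (ContinuousOn.prodMk (by fun_prop) (hTL.comp (by fun_prop) ?_)) ?_)) ?_
    · exact fun p hp => ⟨hrL _ hp.1, trivial⟩
    · exact fun p hp => ⟨hrR _ hp.1, hπTL _ (hrL _ hp.1) _⟩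
    · exact fun p hp => ⟨hp.1, trivial⟩
  have hS' : ContinuousOn S' {p | p.1 ∈ R ∧ π p.2 = q p.1} := by
    refine hSL.comp (ContinuousOn.prodMk (by fun_prop) (hTR.comp
      (ContinuousOn.prodMk (by fun_prop) (hSR.comp (by fun_prop) ?_)) ?_)) ?_
    · exact fun p hp => hp
    · exact fun p hp => ⟨hrR _ hp.1, trivial⟩
    · exact fun p hp => ⟨hrL _ hp.1, hπTR _ (hrR _ hp.1) _⟩
  have hπT' : ∀ z ∈ R, ∀ f, π (T' (z, f)) = q z := fun z hz f => hπTR z hz _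
  have hTT' : ∀ z ∈ L, z ∈ R → ∀ f, T' (z, f) = TL (z, f) := fun z h1 h2 f => by
    simp only [T', hrid z h1 h2]
    exact hTSR z h2 _ (hπTL z h1 f)
  have hSS' : ∀ z ∈ L, z ∈ R → ∀ e, π e = q z → S' (z, e) = SL (z, e) := fun z h1 h2 e he => by
    simp only [S', hrid z h1 h2]
    rw [hTSR z h2 e he]
  let T : B × F → E := fun p => if p.1 ∈ L then TL p else T' p
  let S : B × E → F := fun p => if p.1 ∈ L then SL p else S' p
  have t1 : ∀ z ∈ L, ∀ f, T (z, f) = TL (z, f) := fun z h f => if_pos h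
  have t2 : ∀ z ∈ R, ∀ f, T (z, f) = T' (z, f) := fun z h f => by
    by_cases h' : z ∈ L
    · rw [t1 z h', hTT' z h' h]
    · exact if_neg h'
  have s1 : ∀ z ∈ L, ∀ e, S (z, e) = SL (z, e) := fun z h e => if_pos h
  have s2 : ∀ z ∈ R, ∀ e, π e = q z → S (z, e) = S' (z, e) := fun z h e he => by
    by_cases h' : z ∈ L
    · rw [s1 z h', hSS' z h' h e he]
    · exact if_neg h'
  refine ⟨T, S, ?_, ?_, ?_, ?_, ?_⟩
  · rw [Set.union_prod]
    exact ContinuousOn.union_of_isClosed (hTL.congr fun p hp => t1 _ hp.1 _)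
      (hT'.congr fun p hp => t2 _ hp.1 _) (hLc.prod isClosed_univ) (hRc.prod isClosed_univ)
  · rintro z (hz | hz) f
    · rw [t1 z hz, hπTL z hz]
    · rw [t2 z hz, hπT' z hz]
  · have : {p : B × E | p.1 ∈ L ∪ R ∧ π p.2 = q p.1} =
        {p | p.1 ∈ L ∧ π p.2 = q p.1} ∪ {p | p.1 ∈ R ∧ π p.2 = q p.1} := by
      ext p
      exact or_and_right
    rw [this]
    have he : IsClosed {p : B × E | π p.2 = q p.1} :=
      isClosed_eq (hπ.comp continuous_snd) (hq.comp continuous_fst)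
    exact ContinuousOn.union_of_isClosed (hSL.congr fun p hp => s1 _ hp.1 _)
      (hS'.congr fun p hp => s2 _ hp.1 _ hp.2) ((hLc.preimage continuous_fst).inter he)
      ((hRc.preimage continuous_fst).inter he)
  · rintro z (hz | hz) f
    · rw [t1 z hz, s1 z hz, hSTL z hz]
    · rw [t2 z hz, s2 z hz _ (hπT' z hz f)]
      simp only [S', T']
      rw [hSTR z hz, hTSR _ (hrR z hz) _ (hπTL _ (hrL z hz) f), hSTL _ (hrL z hz)]
  · rintro z (hz | hz) e he
    · rw [t1 z hz, s1 z hz, hTSL z hz e he]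
    · rw [t2 z hz, s2 z hz e he]
      simp only [S', T']
      rw [hTSL _ (hrL z hz) _ (hπTR _ (hrR z hz) _), hSTR _ (hrR z hz), hTSR z hz e he]

end

section

variable {E M F : Type u} [TopologicalSpace E] [TopologicalSpace M] [TopologicalSpace F]
  {π : E → M}

/-- A local trivialization over `U` trivializes the pullback along `q` over any nonempty `P` mapped
into `U`; outside these sets the two maps have arbitrary values. -/
theorem trivOn_of_chart [Nonempty F] {B : Type*} [TopologicalSpace B] {q : B → M}
    (hq : Continuous q) {U : Set M} (e : (π ⁻¹' U) ≃ₜ (U × F))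
    (he : ∀ y : π ⁻¹' U, ((e y).1 : M) = π ↑y) {P : Set B} (hne : P.Nonempty)
    (hP : ∀ z ∈ P, q z ∈ U) : TrivOn F π q P := by
  classical
  obtain ⟨z0, hz0⟩ := hne
  obtain ⟨f0⟩ := ‹Nonempty F›
  have hes : ∀ u f, π (e.symm (u, f)) = u := fun u f => by
    rw [← he (e.symm (u, f)), e.apply_symm_apply]
  let T : B × F → E := fun p => if h : q p.1 ∈ U then (e.symm (⟨q p.1, h⟩, p.2)).1
    else (e.symm (⟨q z0, hP z0 hz0⟩, f0)).1
  let S : B × E → F := fun p => if h : π p.2 ∈ U then (e ⟨p.2, h⟩).2 else f0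
  have hT : ∀ z (hz : z ∈ P) f, T (z, f) = (e.symm (⟨q z, hP z hz⟩, f)).1 :=
    fun z hz f => dif_pos (hP z hz)
  have hS : ∀ z y (hy : π y ∈ U), S (z, y) = (e ⟨y, hy⟩).2 := fun z y hy => dif_pos hy
  refine ⟨T, S, ?_, ?_, ?_, ?_, ?_⟩
  · rw [continuousOn_iff_continuous_domRestrict]
    have : (P ×ˢ Set.univ).domRestrict T =
        fun p : ↥(P ×ˢ (Set.univ : Set F)) => (e.symm (⟨q p.1.1, hP _ p.2.1⟩, p.1.2)).1 := by
      funext p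
      exact hT _ p.2.1 _
    rw [this]
    refine continuous_subtype_val.comp (e.symm.continuous.comp (Continuous.prodMk
      (Continuous.subtype_mk ?_ _) ?_)) <;> fun_prop
  · intro z hz f
    rw [hT z hz, hes]
  · rw [continuousOn_iff_continuous_domRestrict]
    have hU : ∀ p : ↥{p : B × E | p.1 ∈ P ∧ π p.2 = q p.1}, π p.1.2 ∈ U := fun p => by
      rw [p.2.2]; exact hP _ p.2.1
    have : Set.domRestrict {p | p.1 ∈ P ∧ π p.2 = q p.1} S =
        fun p : ↥{p : B × E | p.1 ∈ P ∧ π p.2 = q p.1} => (e ⟨p.1.2, hU p⟩).2 := by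
      funext p
      exact hS _ _ _
    rw [this]
    refine continuous_snd.comp (e.continuous.comp (Continuous.subtype_mk ?_ _))
    fun_prop
  · intro z hz f
    have h1 : π (T (z, f)) ∈ U := by rw [hT z hz, hes]; exact hP z hz
    rw [hS _ _ h1]
    have h2 : (⟨T (z, f), h1⟩ : π ⁻¹' U) = e.symm (⟨q z, hP z hz⟩, f) := Subtype.ext (hT z hz f)
    rw [h2, e.apply_symm_apply]
  · intro z hz y hy
    have h1 : π y ∈ U := by rw [hy]; exact hP z hz
    rw [hS _ _ h1, hT z hz]
    have h2 : ((⟨q z, hP z hz⟩, (e ⟨y, h1⟩).2) : U × F) = e ⟨y, h1⟩ :=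
      Prod.ext (Subtype.ext (by rw [he]; exact hy.symm)) rfl
    rw [h2, e.symm_apply_apply]

/-- Trivializations over the unit cells of the grid glue to one over any box: when a box is divided by
a wall, the coordinate projection retracts a half onto the wall, so that `TrivOn.glue` applies. -/
theorem trivOn_ibox [Nonempty F] [T2Space M] (hπ : Continuous π) {d : ℕ} {q : (Fin d → ℝ) → M}
    (hq : Continuous q)
    (hsmall : ∀ a b : Fin d → ℤ, (∀ i, a i ≤ b i) → (∀ i, b i ≤ a i + 1) → TrivOn F π q (ibox a b))
    (a b : Fin d → ℤ) (hab : ∀ i, a i ≤ b i) : TrivOn F π q (ibox a b) := by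
  refine box_induction (fun a b => TrivOn F π q (ibox a b)) hsmall ?_ a b hab
  intro a b i m hab ham hmb _ hl hr
  have hleft : ∀ x, x ∈ ibox a b → x i ≤ m → x ∈ ibox a (Function.update b i m) :=
    fun x hx hxm j => by
      rcases eq_or_ne j i with rfl | hj
      · simpa [hxm] using (hx j).1
      · simpa [Function.update_of_ne hj] using hx j
  have hright : ∀ x, x ∈ ibox a b → m ≤ x i → x ∈ ibox (Function.update a i m) b :=
    fun x hx hxm j => by
      rcases eq_or_ne j i with rfl | hj
      · simpa [hxm] using (hx j).2
      · simpa [Function.update_of_ne hj] using hx j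
  have hup : ∀ x ∈ ibox (Function.update a i m) b, Function.update x i (m : ℝ) ∈ ibox a b :=
    fun x hx j => by
      rcases eq_or_ne j i with rfl | hj
      · simpa using ⟨ham.le, hmb.le⟩
      · simpa [Function.update_of_ne hj] using hx j
  refine (hl.glue hr (isClosed_ibox _ _) (isClosed_ibox _ _) hπ hq
    (fun z => Function.update z i (m : ℝ)) (by fun_prop) ?_ ?_ ?_).mono ?_
  · intro z hz
    exact hleft _ (hup z hz) (by simp)
  · intro z hz
    exact hright _ (hup z hz) (by simp)
  · intro z hz hz'
    have h1 := (hz i).2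
    have h2 := (hz' i).1
    simp only [Function.update_self] at h1 h2
    rw [← le_antisymm h1 h2, Function.update_eq_self]
  · intro z hz
    rcases le_total (z i) m with h | h
    · exact Or.inl (hleft z hz h)
    · exact Or.inr (hright z hz h)

/-- A fiber bundle is trivial over every closed disk in its base. -/
theorem trivOn_disk [Nonempty F] [T2Space M] (hπ : IsFiberBundle F π) {d : ℕ} {D : Set M}
    (ch : D ≃ₜ closedDisk d) : TrivOn F π (Subtype.val : D → M) Set.univ := by
  -- `q₀` extends the parametrization of the disk to all of `ℝ^d`.
  let R : (Fin d → ℝ) → closedDisk d := fun y =>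
    ⟨(max 1 ‖WithLp.toLp 2 y‖)⁻¹ • WithLp.toLp 2 y, by
      have h1 := le_max_left 1 ‖WithLp.toLp 2 y‖
      have h2 := le_max_right 1 ‖WithLp.toLp 2 y‖
      rw [closedDisk, mem_closedBall_zero_iff, norm_smul, norm_inv,
        Real.norm_of_nonneg (by linarith), inv_mul_le_iff₀ (by linarith)]
      linarith⟩
  have hR : Continuous R := by
    refine Continuous.subtype_mk (Continuous.fun_smul (Continuous.fun_inv₀ (by fun_prop)
      fun x => ?_) (by fun_prop)) _
    have := le_max_left 1 ‖WithLp.toLp 2 x‖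
    positivity
  have hRv : ∀ v : closedDisk d, R (WithLp.ofLp v.1) = v := fun v => by
    have hv : ‖v.1‖ ≤ 1 := mem_closedBall_zero_iff.1 v.2
    refine Subtype.ext ?_
    simp only [R, WithLp.toLp_ofLp]
    rw [max_eq_left hv, inv_one, one_smul]
  let q₀ : (Fin d → ℝ) → M := fun y => (ch.symm (R y) : D)
  have hq₀ : Continuous q₀ := continuous_subtype_val.comp (ch.symm.continuous.comp hR)
  choose U hUo hxU hUe using hπ.locTriv
  obtain ⟨δ, hδ, hL⟩ := lebesgue_number_lemma_of_metric (c := fun x : M => q₀ ⁻¹' U x)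
    (isCompact_closedBall (0 : Fin d → ℝ) 1) (fun x => (hUo x).preimage hq₀)
    (fun y _ => Set.mem_iUnion.2 ⟨q₀ y, hxU _⟩)
  obtain ⟨N, hN⟩ := exists_nat_gt (max 1 (1 / δ))
  have hN1 : (1 : ℝ) < N := (le_max_left _ _).trans_lt hN
  have hN0 : (0 : ℝ) < N := by linarith
  have hNδ : 1 / (N : ℝ) < δ := by
    rw [div_lt_comm₀ hN0 hδ]; exact (le_max_right _ _).trans_lt hN
  let r : (Fin d → ℝ) → (Fin d → ℝ) := fun y => cubeClamp ((N : ℝ)⁻¹ • y)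
  have hr : Continuous r := continuous_cubeClamp.comp (by fun_prop)
  have hT := trivOn_ibox (F := F) hπ.continuous (hq₀.comp hr) (fun a b hab hba => by
    have ha : (fun j => (a j : ℝ)) ∈ ibox a b := fun j => ⟨le_rfl, by
      show (a j : ℝ) ≤ b j
      exact_mod_cast hab j⟩
    obtain ⟨x, hx⟩ := hL (r fun j => (a j : ℝ)) (by simpa using norm_cubeClamp_le _)
    obtain ⟨e, he⟩ := hUe x
    refine trivOn_of_chart (hq₀.comp hr) e he ⟨_, ha⟩ fun z hz => hx ?_
    refine lt_of_le_of_lt ((dist_cubeClamp_le _ _).trans ?_) hNδ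
    rw [dist_smul₀, norm_inv, Real.norm_of_nonneg hN0.le, inv_mul_eq_div]
    gcongr
    refine (dist_pi_le_iff zero_le_one).2 fun j => ?_
    have h1 := hz j
    have h2 : (b j : ℝ) ≤ a j + 1 := by exact_mod_cast hba j
    rw [Real.dist_eq]
    exact abs_le.2 ⟨by linarith, by linarith⟩) (fun _ => -(N : ℤ)) (fun _ => (N : ℤ)) (fun i => by
      have : (0 : ℤ) < N := by exact_mod_cast hN0
      omega)
  have hv : ∀ (x : D) i, |WithLp.ofLp (ch x).1 i| ≤ 1 := fun x i =>
    (PiLp.norm_apply_le (ch x).1 i).trans (mem_closedBall_zero_iff.1 (ch x).2)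
  have := hT.pullback (P' := Set.univ) (fun x : D => (N : ℝ) • WithLp.ofLp (ch x).1) (by fun_prop)
    (fun x _ i => by
      have h1 := abs_le.1 (hv x i)
      simp only [Pi.smul_apply, smul_eq_mul]
      push_cast
      constructor <;> nlinarith)
  convert this using 2 with x
  show (x : M) = (ch.symm (R (cubeClamp ((N : ℝ)⁻¹ • (N : ℝ) • WithLp.ofLp (ch x).1))) : D)
  rw [inv_smul_smul₀ hN0.ne', cubeClamp_of_le ((pi_norm_le_iff_of_nonneg zero_le_one).2 (hv x)),
    hRv, ch.symm_apply_apply]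

end

/-! ### Deforming sections to a given germ -/

theorem homotopic_of_contractible {Y F : Type*} [TopologicalSpace Y] [TopologicalSpace F]
    [ContractibleSpace Y] [PathConnectedSpace F] (f g : C(Y, F)) : f.Homotopic g := by
  obtain ⟨y, hy⟩ := id_nullhomotopic Y
  have key : ∀ f : C(Y, F), f.Homotopic (ContinuousMap.const Y (f y)) := fun f =>
    (ContinuousMap.Homotopic.refl f).comp hy
  have : Nonempty Y := ⟨y⟩
  exact (key f).trans ((ContinuousMap.homotopic_const_iff.2
    (PathConnectedSpace.joined (f y) (g y))).trans (key g).symm)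

/-- A closed cofibration admits a retraction of the cylinder `X × [0,1]` onto the union of its bottom
`X × {0}` and `A × [0,1]`. -/
theorem ClosedCofibration.exists_retraction {X : Type u} [TopologicalSpace X] {A : Set X}
    (h : ClosedCofibration A) :
    ∃ ρ : C(X × I, {p : X × I // p.2 = 0 ∨ p.1 ∈ A}),
      (∀ x, (ρ (x, 0)).1 = (x, 0)) ∧ ∀ a ∈ A, ∀ t, (ρ (a, t)).1 = (a, t) := by
  obtain ⟨H, h0, h1⟩ := h.2 {p : X × I // p.2 = 0 ∨ p.1 ∈ A}
    ⟨fun x => ⟨(x, 0), Or.inl rfl⟩, by fun_prop⟩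
    ⟨fun p => ⟨(p.1.1, p.2), Or.inr p.1.2⟩, by fun_prop⟩ (fun a => rfl)
  exact ⟨H, fun x => by rw [h0]; rfl, fun a ha t => by rw [h1 ⟨a, ha⟩ t]; rfl⟩

/-- Given a family of sections and a germ `g` with `g.Δ` disjoint from a closed set `C`, the family can be
deformed rel `C` to one consisting of sections with germ `g`.  Over a disk `D` containing `g.Δ` the
bundle is trivial, and there the family and the germ give maps from the contractible space
`ℝ^n × Δ` to the path-connected fiber; a homotopy between these is extended to `D` along the
cofibration `Δ ↪ D`, and damped out by a cutoff function. -/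
theorem exists_deform_to_germ {E M F : Type u} [TopologicalSpace E] [TopologicalSpace M]
    [TopologicalSpace F] [LocallyCompactSpace M] [T2Space M] [PathConnectedSpace F] {π : E → M}
    (hπ : IsFiberBundle F π) {d : ℕ} (g : GermData π) (hgc : IsCompact g.Δ)
    (hgcontr : ContractibleSpace g.Δ) {D : Set M} (ch : D ≃ₜ closedDisk d)
    (hgD : g.Δ ⊆ interior D) (hcof : ClosedCofibration (X := D) (Subtype.val ⁻¹' g.Δ))
    {C : Set M} (hC : IsClosed C) (hgC : Disjoint g.Δ C) {n : ℕ}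
    (b : C(Fin n → ℝ, SectionSpace π)) :
    ∃ H : C((Fin n → ℝ) × ℝ, SectionSpace π), (∀ x, H (x, 0) = b x) ∧
      (∀ x, g.Fixes (H (x, 1))) ∧ ∀ x t, ∀ z ∈ C, (H (x, t)).1 z = (b x).1 z := by
  classical
  set A : Set D := Subtype.val ⁻¹' g.Δ with hA
  have hAU : ∀ z ∈ A, (z : M) ∈ g.U := fun z hz => g.subset hz
  obtain ⟨T, S, hT, hπT, hS, hST, hTS⟩ := trivOn_disk (F := F) hπ ch
  have hT : Continuous T := by
    rw [← continuousOn_univ]; simpa using hT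
  have hDc : IsClosed D := by
    have h1 : CompactSpace (closedDisk d) :=
      isCompact_iff_compactSpace.1 (isCompact_closedBall _ _)
    have h2 : CompactSpace D := ch.symm.compactSpace
    exact (isCompact_iff_compactSpace.2 h2).isClosed
  have hbc : Continuous fun p : (Fin n → ℝ) × M => (b p.1).1 p.2 := by
    have : Continuous fun x => (b x).1 := continuous_subtype_val.comp b.continuous
    fun_prop
  -- the family and the germ in the trivialization
  let β : C((Fin n → ℝ) × D, F) := ⟨fun p => S (p.2, (b p.1).1 p.2), by
    refine hS.comp_continuous (f := fun p : (Fin n → ℝ) × D => (p.2, (b p.1).1 p.2)) ?_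
      (fun p => ⟨trivial, (b p.1).2 _⟩)
    exact Continuous.prodMk continuous_snd (hbc.comp
      (by fun_prop : Continuous fun p : (Fin n → ℝ) × D => (p.1, (p.2 : M))))⟩
  let γ : C(A, F) := ⟨fun a => S (a.1, g.sec ⟨a.1, hAU _ a.2⟩), by
    refine hS.comp_continuous (f := fun a : A => (a.1, g.sec ⟨a.1, hAU _ a.2⟩)) ?_
      (fun a => ⟨trivial, g.isSec _⟩)
    fun_prop⟩
  have hAcontr : ContractibleSpace A := by
    let e : A ≃ₜ g.Δ :=
      { toFun := fun a => ⟨a.1.1, a.2⟩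
        invFun := fun z => ⟨⟨z.1, interior_subset (hgD z.2)⟩, z.2⟩
        left_inv := fun _ => rfl
        right_inv := fun _ => rfl
        continuous_toFun := by fun_prop
        continuous_invFun := by fun_prop }
    exact e.contractibleSpace
  obtain ⟨Θ⟩ := homotopic_of_contractible
    (⟨fun p => β (p.1, p.2.1), by fun_prop⟩ : C((Fin n → ℝ) × A, F))
    ⟨fun p => γ p.2, by fun_prop⟩
  have hΘ0 : ∀ p, Θ (0, p) = β (p.1, p.2.1) := fun p => Θ.apply_zero p
  have hΘ1 : ∀ p, Θ (1, p) = γ p.2 := fun p => Θ.apply_one p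
  obtain ⟨ρ, hρ0, hρA⟩ := hcof.exists_retraction
  let ψ : (Fin n → ℝ) × {p : D × I // p.2 = 0 ∨ p.1 ∈ A} → F := fun p =>
    if h : p.2.1.1 ∈ A then Θ (p.2.1.2, (p.1, ⟨p.2.1.1, h⟩)) else β (p.1, p.2.1.1)
  have hψA : ∀ p (h : p.2.1.1 ∈ A), ψ p = Θ (p.2.1.2, (p.1, ⟨p.2.1.1, h⟩)) :=
    fun p h => dif_pos h
  have hψ0 : ∀ p, p.2.1.2 = 0 → ψ p = β (p.1, p.2.1.1) := fun p h => by
    by_cases h' : p.2.1.1 ∈ A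
    · rw [hψA p h', h, hΘ0]
    · exact dif_neg h'
  have hψ : Continuous ψ := by
    have hcov : {p : (Fin n → ℝ) × {p : D × I // p.2 = 0 ∨ p.1 ∈ A} | p.2.1.2 = 0} ∪
        {p | p.2.1.1 ∈ A} = Set.univ := by
      ext p
      simpa using p.2.2
    rw [← continuousOn_univ, ← hcov]
    refine ContinuousOn.union_of_isClosed ?_ ?_ (isClosed_eq (by fun_prop) (by fun_prop))
      (hcof.1.preimage (by fun_prop))
    · refine ContinuousOn.congr (f := fun p => β (p.1, p.2.1.1)) ?_ (fun p hp => hψ0 p hp)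
      fun_prop
    · rw [continuousOn_iff_continuous_domRestrict]
      have : Set.domRestrict {p : (Fin n → ℝ) × {p : D × I // p.2 = 0 ∨ p.1 ∈ A} | p.2.1.1 ∈ A} ψ
          = fun p => Θ (p.1.2.1.2, (p.1.1, ⟨p.1.2.1.1, p.2⟩)) := by
        funext p
        exact hψA _ p.2
      rw [this]
      fun_prop
  obtain ⟨l, hl1, hl0, -, hl⟩ := exists_continuous_one_zero_of_isCompact hgc
    (t := (interior D)ᶜ ∪ C) (isOpen_interior.isClosed_compl.union hC)
    (Set.disjoint_union_right.2 ⟨Set.disjoint_compl_right_iff_subset.2 hgD, hgC⟩)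
  -- the time for which the homotopy is run at a point
  let τ : ℝ × M → I := fun p =>
    ⟨max 0 (min 1 p.1) * l p.2, by
      have h1 : max 0 (min 1 p.1) ≤ 1 := max_le zero_le_one (min_le_left _ _)
      exact ⟨mul_nonneg (le_max_left _ _) (hl _).1, mul_le_one₀ h1 (hl _).1 (hl _).2⟩⟩
  have hτ : Continuous τ := by
    refine Continuous.subtype_mk ?_ _
    fun_prop
  have hτl : ∀ t z, l z = 0 → τ (t, z) = 0 := fun t z h => Subtype.ext (by simp [τ, h])
  have hτ0 : ∀ z, τ (0, z) = 0 := fun z => Subtype.ext (by simp [τ])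
  have hτ1 : ∀ z ∈ g.Δ, τ (1, z) = 1 := fun z hz => Subtype.ext (by simp [τ, hl1 hz])
  let k : ((Fin n → ℝ) × ℝ) × D → E := fun p =>
    T (p.2, ψ (p.1.1, ρ (p.2, τ (p.1.2, p.2))))
  have hk : Continuous k := by fun_prop
  let h : ((Fin n → ℝ) × ℝ) × M → E := fun p =>
    if hz : p.2 ∈ D then k (p.1, ⟨p.2, hz⟩) else (b p.1.1).1 p.2
  have hhD : ∀ p (hz : p.2 ∈ D), h p = k (p.1, ⟨p.2, hz⟩) := fun p hz => dif_pos hz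
  have hhτ : ∀ p : ((Fin n → ℝ) × ℝ) × M, τ (p.1.2, p.2) = 0 → h p = (b p.1.1).1 p.2 :=
    fun p hp => by
      by_cases hz : p.2 ∈ D
      · rw [hhD p hz]
        simp only [k]
        rw [hp, hψ0 _ (by rw [hρ0]), hρ0]
        exact hTS _ trivial _ ((b _).2 _)
      · exact dif_neg hz
  have hh : Continuous h := by
    have hcov : {p : ((Fin n → ℝ) × ℝ) × M | p.2 ∈ D} ∪ {p | p.2 ∈ (interior D)ᶜ} = Set.univ := by
      ext p
      by_cases hp : p.2 ∈ interior D
      · simp [interior_subset hp]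
      · simp [hp]
    rw [← continuousOn_univ, ← hcov]
    refine ContinuousOn.union_of_isClosed ?_ ?_ (hDc.preimage continuous_snd)
      (isOpen_interior.isClosed_compl.preimage continuous_snd)
    · rw [continuousOn_iff_continuous_domRestrict]
      have : Set.domRestrict {p : ((Fin n → ℝ) × ℝ) × M | p.2 ∈ D} h
          = fun p => k (p.1.1, ⟨p.1.2, p.2⟩) := by
        funext p
        exact hhD _ p.2
      rw [this]
      fun_prop
    · refine ContinuousOn.congr (f := fun p => (b p.1.1).1 p.2) ?_ (fun p hp => hhτ p ?_)
      · exact (hbc.comp (by fun_prop : Continuous fun p : ((Fin n → ℝ) × ℝ) × M =>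
          (p.1.1, p.2))).continuousOn
      · exact hτl _ _ (hl0 (Or.inl hp))
  have hπh : ∀ p, π (h p) = p.2 := fun p => by
    by_cases hz : p.2 ∈ D
    · rw [hhD p hz]
      exact hπT _ trivial _
    · have : h p = (b p.1.1).1 p.2 := dif_neg hz
      rw [this, (b _).2]
  refine ⟨⟨fun q => ⟨(ContinuousMap.curry ⟨h, hh⟩) q, fun z => hπh (q, z)⟩, ?_⟩, ?_, ?_, ?_⟩
  · exact Continuous.subtype_mk (ContinuousMap.continuous _) _
  · intro x
    refine Subtype.ext (ContinuousMap.ext fun z => ?_)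
    exact hhτ ((x, 0), z) (hτ0 z)
  · intro x z hz
    have hzD : z ∈ D := interior_subset (hgD hz)
    have hzA : (⟨z, hzD⟩ : D) ∈ A := hz
    show h ((x, 1), z) = _
    rw [hhD _ hzD]
    have e1 : (ρ (⟨z, hzD⟩, 1)).1 = (⟨z, hzD⟩, 1) := hρA _ hzA 1
    have e2 : ρ (⟨z, hzD⟩, 1) = ⟨(⟨z, hzD⟩, 1), Or.inr hzA⟩ := Subtype.ext e1
    simp only [k]
    rw [hτ1 z hz, e2, hψA _ hzA, hΘ1]
    exact hTS ⟨z, hzD⟩ trivial _ (g.isSec _)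
  · intro x t z hz
    exact hhτ ((x, t), z) (hτl _ _ (hl0 (Or.inr hz)))

theorem relSections_comp_equiv {E M : Type u} [TopologicalSpace E] [TopologicalSpace M] {π : E → M}
    (g : ℕ → GermData π) (S : Finset ℕ) {k : ℕ} (e : Fin k ≃ S) :
    relSections (fun j => g (e j)) = ⋂ i ∈ S, {s | (g i).Fixes s} := by
  ext s
  simp only [relSections, Set.mem_iInter, Set.mem_ofPred_eq]
  refine ⟨fun h i hi => ?_, fun h j => h _ (e j).2⟩
  simpa using h (e.symm ⟨i, hi⟩)

/-- A sufficiently separated collection contains an infinite sequence of elements with pairwise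
disjoint underlying sets. -/
theorem IsSuffSep.exists_seq {d : ℕ} {E M : Type u} [TopologicalSpace E] [TopologicalSpace M]
    {π : E → M} {W : Set (GermData π)} (hW : IsSuffSep d π W) :
    ∃ g : ℕ → GermData π, (∀ n, g n ∈ W) ∧ ∀ m n, m ≠ n → Disjoint (g m).Δ (g n).Δ := by
  obtain ⟨g, hg, hgd⟩ := exists_seq_of_forall_finset_exists (fun g => g ∈ W)
    (fun g g' : GermData π => Disjoint g.Δ g'.Δ) (fun s hs => by
      obtain ⟨g', hg', D, -, hD, hdisj⟩ := hW.sep s.card (fun i => (s.equivFin.symm i).1)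
        (fun i => hs _ (s.equivFin.symm i).2)
      refine ⟨g', hg', fun x hx => ?_⟩
      have := hdisj (s.equivFin ⟨x, hx⟩)
      rw [Equiv.symm_apply_apply] at this
      exact (this.mono_left (hD.trans interior_subset)).symm)
  refine ⟨g, hg, fun m n hmn => ?_⟩
  rcases hmn.lt_or_gt with h | h
  · exact hgd m n h
  · exact (hgd n m h).symm

/-- **Theorem A.** Let `M` be a `d`-dimensional manifold without boundary, `π : E → M` a fiber
bundle with path-connected fiber `F`, and `W` a sufficiently separated collection for `π`.
Let `Fs ⊆ Γ(E)` be a subspace of "holonomic solutions", and for disjoint tuples of elements of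
`W` let `Fs ∩ relSections g` be the corresponding relative space.  If for every `k ≥ 1` and
every `k`-tuple of pairwise disjoint elements of `W` the inclusion
`Fs ∩ Γ(E, Δ_1, …, Δ_k) ↪ Γ(E, Δ_1, …, Δ_k)` is a weak homotopy equivalence, then there is a
space `X` and maps `s : X → Fs`, `w : X → Γ(E)` such that `w` is the composite of `s` with the
inclusion `Fs ↪ Γ(E)` and `w` is a weak homotopy equivalence: the inclusion `Fs ↪ Γ(E)` admits
a section up to weak homotopy. -/
theorem holonomic_section_up_to_homotopy {d : ℕ} {E M F : Type u}
    [TopologicalSpace E] [TopologicalSpace M] [TopologicalSpace F]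
    [ChartedSpace (EuclideanSpace ℝ (Fin d)) M] [T2Space M] [PathConnectedSpace F]
    (π : E → M) (hπ : IsFiberBundle F π)
    (W : Set (GermData π)) (hW : IsSuffSep d π W)
    (Fs : Set (SectionSpace π))
    (hyp : ∀ (k : ℕ), 1 ≤ k → ∀ g : Fin k → GermData π, (∀ i, g i ∈ W) → DisjTuple g →
      IsWeakHomotopyEquiv (fun s : ↥(Fs ∩ relSections g) =>
        (⟨s.1, s.2.2⟩ : ↥(relSections g)))) :
    ∃ (X : Type u) (_ : TopologicalSpace X) (s : X → ↥Fs) (w : X → SectionSpace π),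
      Continuous s ∧ Continuous w ∧ (∀ x, w x = ↑(s x)) ∧ IsWeakHomotopyEquiv w := by
  classical
  have : LocallyCompactSpace M := ChartedSpace.locallyCompactSpace (EuclideanSpace ℝ (Fin d)) M
  obtain ⟨g, hg, hgd⟩ := hW.exists_seq
  let G : ℕ → Set (SectionSpace π) := fun i => {s | (g i).Fixes s}
  refine ⟨Resolution Fs G, inferInstance, fun p => p.1.1, resolutionMap Fs G, by fun_prop,
    ContinuousMap.continuous _, fun _ => rfl, isWeakHomotopyEquiv_of_hLift fun n =>
      hLift_resolutionMap ?_ ?_ n⟩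
  · intro S hS k
    have hc := compress_of_whe Set.inter_subset_right (hyp S.card (Finset.card_pos.2 hS)
      (fun j => g (S.equivFin.symm j)) (fun j => hg _) (fun i j hij => hgd _ _ fun h =>
        hij (S.equivFin.symm.injective (Subtype.ext h)))) k
    rwa [relSections_comp_equiv] at hc
  · intro n b S
    obtain ⟨m, hm⟩ := S.exists_notMem
    obtain ⟨D, ⟨ch⟩, hD, hcof⟩ := hW.cofib _ (hg m)
    obtain ⟨H, H0, H1, HC⟩ := exists_deform_to_germ hπ (g m) (hW.compact _ (hg m))
      (hW.contractible _ (hg m)) ch hD hcof (C := ⋃ i ∈ S, (g i).Δ)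
      (S.finite_toSet.isClosed_biUnion fun i _ => (hW.compact _ (hg i)).isClosed)
      (Set.disjoint_iUnion₂_right.2 fun i hi => hgd _ _ fun h => hm (h ▸ hi)) b
    refine ⟨m, H, H0, H1, fun x t _ i hi hb z hz => ?_⟩
    rw [HC x t z (Set.mem_biUnion hi hz)]
    exact hb z hz
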